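/- arXiv:1101.4522 — 4 statements merged into one kernel-verified Lean document; each statement's English description precedes it below -/
import Mathlib

section
/- For every integer d ≥ 2, the liminf as n → ∞ of (1/n)·E_F(α_d^{⊗n}) is at least log₂(4/3), where α_d^{⊗n} is viewed as a bipartite state on ((ℂ^d)^{⊗n})_A ⊗ ((ℂ^d)^{⊗n})_B by grouping the n first tensor factors on one side and the n second tensor factors on the other. (This is the paper's lower bound E_C(α_d) ≥ log₂(4/3) on the entanglement cost of the antisymmetric state.) -/
open scoped BigOperators
open Classical
open scoped ComplexOrder

noncomputable section

/-- Partial trace over the second tensor factor: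
`(ptraceSnd M) a a' = ∑ b, M (a,b) (a',b)`. -/
def ptraceSnd {α β : Type*} [Fintype β] (M : Matrix (α × β) (α × β) ℂ) : Matrix α α ℂ :=
  Matrix.of fun a a' => ∑ b : β, M (a, b) (a', b)

/-- Von Neumann entropy (in bits) of a matrix, via the eigenvalues of a Hermitian matrix
(with the convention `0 * log₂ 0 = 0`, automatic since `Real.logb 2 0 = 0`). -/
def vnEntropy {ι : Type*} [Fintype ι] [DecidableEq ι] (ρ : Matrix ι ι ℂ) : ℝ :=
  if h : ρ.IsHermitian then -∑ i, h.eigenvalues i * Real.logb 2 (h.eigenvalues i) else 0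

/-- Entanglement of formation of a bipartite (density) matrix: the infimum of the average
entropy of entanglement over all finite pure-state ensembles for `ρ`. -/
def EoF {α β : Type*} [Fintype α] [DecidableEq α] [Fintype β] [DecidableEq β]
    (ρ : Matrix (α × β) (α × β) ℂ) : ℝ :=
  sInf {E : ℝ | ∃ (k : ℕ) (p : Fin k → ℝ) (ψ : Fin k → (α × β → ℂ)),
    (∀ i, 0 ≤ p i) ∧ (∑ i, p i = 1) ∧
    (∀ i, ∑ x, Complex.normSq (ψ i x) = 1) ∧
    (∑ i, p i • Matrix.vecMulVec (ψ i) (star (ψ i)) = ρ) ∧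
    E = ∑ i, p i * vnEntropy (ptraceSnd (Matrix.vecMulVec (ψ i) (star (ψ i))))}

/-- The antisymmetric projector `P₂^{(d)} = (1/2)(𝟙 - F)` on `ℂ^d ⊗ ℂ^d`. -/
def asymProj (d : ℕ) : Matrix (Fin d × Fin d) (Fin d × Fin d) ℂ :=
  Matrix.of fun p q => (1 / 2 : ℂ) *
    ((if p.1 = q.1 ∧ p.2 = q.2 then 1 else 0) - (if p.1 = q.2 ∧ p.2 = q.1 then 1 else 0))

/-- The antisymmetric state `α_d = P₂^{(d)} / binom(d,2)`. -/
def antisymState (d : ℕ) : Matrix (Fin d × Fin d) (Fin d × Fin d) ℂ :=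
  (1 / (Nat.choose d 2 : ℂ)) • asymProj d

/-- `α_d^{⊗n}`, viewed as a bipartite state on `((ℂ^d)^{⊗n})_A ⊗ ((ℂ^d)^{⊗n})_B`
(the `n` first tensor factors grouped on the `A` side, the `n` second ones on the `B` side). -/
def alphaPow (d n : ℕ) :
    Matrix ((Fin n → Fin d) × (Fin n → Fin d)) ((Fin n → Fin d) × (Fin n → Fin d)) ℂ :=
  Matrix.of fun p q => ∏ i : Fin n, antisymState d (p.1 i, p.2 i) (q.1 i, q.2 i)

/-- `(P₂^{(d)})^{⊗n}`, viewed as an operator on `((ℂ^d)^{⊗n})_A ⊗ ((ℂ^d)^{⊗n})_B`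
(the `n` first tensor factors grouped on the `A` side, the `n` second ones on the `B` side). -/
def asymPow (d n : ℕ) :
    Matrix ((Fin n → Fin d) × (Fin n → Fin d)) ((Fin n → Fin d) × (Fin n → Fin d)) ℂ :=
  Matrix.of fun p q => ∏ i : Fin n, asymProj d (p.1 i, p.2 i) (q.1 i, q.2 i)

/-- The antisymmetrizer `P_k^{(d)} = (1/k!) ∑_{σ ∈ S_k} sgn(σ) U_σ` on `(ℂ^d)^{⊗k}`. -/
def asymProjK (d k : ℕ) : Matrix (Fin k → Fin d) (Fin k → Fin d) ℂ :=
  Matrix.of fun f g => (1 / (Nat.factorial k) : ℂ) *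
    ∑ σ : Equiv.Perm (Fin k), ((Equiv.Perm.sign σ : ℤ) : ℂ) * (if f = g ∘ σ then 1 else 0)

/-- Quantum conditional mutual information `I(A;B|E) = H(AE) + H(BE) - H(ABE) - H(E)`
(in bits) of a tripartite (density) matrix. -/
def condMutInfo {α β γ : Type*} [Fintype α] [DecidableEq α] [Fintype β] [DecidableEq β]
    [Fintype γ] [DecidableEq γ] (ρ : Matrix ((α × β) × γ) ((α × β) × γ) ℂ) : ℝ :=
  vnEntropy (Matrix.of fun p q : α × γ => ∑ b : β, ρ ((p.1, b), p.2) ((q.1, b), q.2))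
  + vnEntropy (Matrix.of fun p q : β × γ => ∑ a : α, ρ ((a, p.1), p.2) ((a, q.1), q.2))
  - vnEntropy ρ
  - vnEntropy (Matrix.of fun e e' : γ => ∑ a : α, ∑ b : β, ρ ((a, b), e) ((a, b), e'))

/-- Squashed entanglement: `E_sq(ρ_AB) = inf (1/2) I(A;B|E)` over all finite-dimensional
extensions `ρ_ABE` of `ρ_AB`. -/
def Esq {α β : Type*} [Fintype α] [DecidableEq α] [Fintype β] [DecidableEq β]
    (ρ : Matrix (α × β) (α × β) ℂ) : ℝ :=
  sInf {x : ℝ | ∃ (m : ℕ) (σ : Matrix ((α × β) × Fin m) ((α × β) × Fin m) ℂ),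
    σ.PosSemidef ∧ σ.trace = 1 ∧ ptraceSnd σ = ρ ∧ x = (1 / 2) * condMutInfo σ}

/-- The operator norm `‖·‖_∞` of a matrix, acting on Euclidean space. -/
def opNorm {ι : Type*} [Fintype ι] [DecidableEq ι] (M : Matrix ι ι ℂ) : ℝ :=
  ‖Matrix.toEuclideanCLM (𝕜 := ℂ) M‖

/-- A bipartite (density) matrix is separable if it is a finite convex combination of
product density matrices. -/
def IsSeparableMat {α β : Type*} [Fintype α] [Fintype β]
    (σ : Matrix (α × β) (α × β) ℂ) : Prop :=
  ∃ (k : ℕ) (p : Fin k → ℝ) (ρA : Fin k → Matrix α α ℂ) (ρB : Fin k → Matrix β β ℂ),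
    (∀ i, 0 ≤ p i) ∧ (∑ i, p i = 1) ∧
    (∀ i, (ρA i).PosSemidef) ∧ (∀ i, (ρA i).trace = 1) ∧
    (∀ i, (ρB i).PosSemidef) ∧ (∀ i, (ρB i).trace = 1) ∧
    σ = ∑ i, p i • Matrix.kroneckerMap (· * ·) (ρA i) (ρB i)

section absrep
variable {n : ℕ} {H : Type*} [NormedAddCommGroup H] [InnerProductSpace ℂ H]

abbrev pS (j : Fin n) : Equiv.Perm (Fin n × Fin 4) := Equiv.swap (j,0) (j,1)
abbrev pS' (j : Fin n) : Equiv.Perm (Fin n × Fin 4) := Equiv.swap (j,2) (j,3)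
abbrev pF (j : Fin n) : Equiv.Perm (Fin n × Fin 4) := Equiv.swap (j,0) (j,2)
abbrev pW (j : Fin n) : Equiv.Perm (Fin n × Fin 4) := pF j * Equiv.swap (j,1) (j,3)

/-- disjointness of swaps at different sites -/
lemma swap_comm_site {i j : Fin n} (h : i ≠ j) (a b c e : Fin 4) :
    Commute (Equiv.swap (i,a) (i,b)) (Equiv.swap (j,c) (j,e)) := by
  by_cases hab : a = b
  · subst hab; simp [Equiv.swap_self]; exact Commute.one_left _
  by_cases hce : c = e
  · subst hce; simp [Equiv.swap_self]; exact Commute.one_right _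
  apply Equiv.Perm.Disjoint.commute
  intro x
  by_cases hx : x.1 = i
  · right; apply Equiv.swap_apply_of_ne_of_ne <;> (rintro rfl; simp_all)
  · left; apply Equiv.swap_apply_of_ne_of_ne <;> (rintro rfl; simp_all)

variable (T : Equiv.Perm (Fin n × Fin 4) →* Module.End ℂ H)

lemma T_comm {p q : Equiv.Perm (Fin n × Fin 4)} (h : Commute p q) (v : H) :
    T p (T q v) = T q (T p v) := by
  rw [← Module.End.mul_apply, ← Module.End.mul_apply, ← map_mul, ← map_mul, h.eq]

lemma T_mul (p q : Equiv.Perm (Fin n × Fin 4)) (v : H) : T p (T q v) = T (p * q) v := by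
  rw [map_mul, Module.End.mul_apply]

lemma T_swap_swap (a b : Fin n × Fin 4) (v : H) :
    T (Equiv.swap a b) (T (Equiv.swap a b) v) = v := by
  rw [T_mul, Equiv.swap_mul_self, map_one]; rfl

/-- antisymmetric vectors -/
def inL (v : H) : Prop := ∀ j : Fin n, T (pS j) v = -v ∧ T (pS' j) v = -v

/-- The compressed operator -/
def Qop (j : Fin n) (u : H) : H :=
  (1/4 : ℂ) • (u - T (pS j) u - T (pS' j) u + T (pS j) (T (pS' j) u))

def Dop (j : Fin n) : Module.End ℂ H := T (pF j) + (1/4 : ℂ) • 1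

lemma Dop_apply (j : Fin n) (v : H) : Dop T j v = T (pF j) v + (1/4 : ℂ) • v := by
  simp [Dop]

def adjT : Prop := ∀ (p : Equiv.Perm (Fin n × Fin 4)) (u v : H),
  inner ℂ (T p u) v = inner ℂ u (T p⁻¹ v)

variable {T}

lemma adj_swap (hT : adjT T) (a b : Fin n × Fin 4) (u v : H) :
    inner ℂ (T (Equiv.swap a b) u) v = inner ℂ u (T (Equiv.swap a b) v) := by
  rw [hT, Equiv.swap_inv]

lemma comm_SS' (j : Fin n) : Commute (pS j) (pS' j) := by
  apply Equiv.Perm.Disjoint.commute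
  intro x
  by_cases hx : x = (j,0) ∨ x = (j,1)
  · right; rcases hx with rfl | rfl <;> apply Equiv.swap_apply_of_ne_of_ne <;> simp
  · left; push Not at hx; exact Equiv.swap_apply_of_ne_of_ne hx.1 hx.2

lemma Q_adj (hT : adjT T) (j : Fin n) (u v : H) :
    inner ℂ (Qop T j u) v = inner ℂ u (Qop T j v) := by
  simp only [Qop, inner_smul_left, inner_smul_right, inner_add_left, inner_sub_left,
    inner_add_right, inner_sub_right, adj_swap hT]
  rw [T_comm T (comm_SS' j).symm v]
  rw [show (starRingEnd ℂ) (1/4 : ℂ) = 1/4 by simp [Complex.ext_iff]]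

lemma Q_of_inL {v : H} (hv : inL T v) (j : Fin n) : Qop T j v = v := by
  simp only [Qop, (hv j).1, (hv j).2, map_neg]
  rw [show v - -v - -v + - -v = (4:ℂ) • v by module]
  rw [smul_smul]; norm_num

lemma Q_S (j : Fin n) (u : H) : T (pS j) (Qop T j u) = - Qop T j u := by
  simp only [Qop, map_smul, map_add, map_sub, T_swap_swap]
  rw [← smul_neg]; congr 1; abel

lemma Q_S' (j : Fin n) (u : H) : T (pS' j) (Qop T j u) = - Qop T j u := by
  simp only [Qop, map_smul, map_add, map_sub, T_swap_swap]
  rw [T_comm T (comm_SS' j) u, T_swap_swap]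
  rw [← smul_neg]; congr 1; abel

lemma Q_comm_site {i j : Fin n} (h : i ≠ j) (a b : Fin 4) (u : H) :
    T (Equiv.swap (i,a) (i,b)) (Qop T j u) = Qop T j (T (Equiv.swap (i,a) (i,b)) u) := by
  simp only [Qop, map_smul, map_add, map_sub]
  rw [T_comm T (swap_comm_site h a b 0 1) u, T_comm T (swap_comm_site h a b 0 1),
    T_comm T (swap_comm_site h a b 2 3)]

/-- K v = Q D v lies in L -/
lemma K_inL {v : H} (hv : inL T v) (j : Fin n) : inL T (Qop T j (Dop T j v)) := by
  intro i
  by_cases h : i = j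
  · subst h; exact ⟨Q_S _ _, Q_S' _ _⟩
  · have key : ∀ a b : Fin 4, T (Equiv.swap (i,a) (i,b)) v = -v →
        T (Equiv.swap (i,a) (i,b)) (Qop T j (Dop T j v)) = -Qop T j (Dop T j v) := by
      intro a b hab
      rw [Q_comm_site h, Dop_apply, map_add, map_smul, T_comm T (swap_comm_site h a b 0 2), hab]
      simp only [Qop, map_neg, smul_neg, map_add, map_smul]
      module
    exact ⟨key 0 1 (hv i).1, key 2 3 (hv i).2⟩

lemma norm_T (hT : adjT T) (p : Equiv.Perm (Fin n × Fin 4)) (v : H) : ‖T p v‖ = ‖v‖ := by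
  have : inner ℂ (T p v) (T p v) = inner ℂ v v := by
    rw [hT, T_mul]; simp
  rw [inner_self_eq_norm_sq_to_K, inner_self_eq_norm_sq_to_K] at this
  have h2 : ‖T p v‖^2 = ‖v‖^2 := by exact_mod_cast this
  exact (sq_eq_sq₀ (norm_nonneg _) (norm_nonneg _)).1 h2


lemma perm_FSF (j : Fin n) : pF j * (pS j * pF j) = pS j * (pF j * pS j) := by
  apply Equiv.ext; rintro ⟨i, c⟩
  by_cases h : i = j
  · subst h; fin_cases c <;> simp [Equiv.swap_apply_def]
  · simp [Equiv.swap_apply_def, h]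

lemma perm_FS'F (j : Fin n) : pF j * (pS' j * pF j) = pS' j * (pF j * pS' j) := by
  apply Equiv.ext; rintro ⟨i, c⟩
  by_cases h : i = j
  · subst h; fin_cases c <;> simp [Equiv.swap_apply_def]
  · simp [Equiv.swap_apply_def, h]

lemma perm_FSS'F (j : Fin n) : pF j * (pS j * (pS' j * pF j)) = pW j * (pS j * pS' j) := by
  apply Equiv.ext; rintro ⟨i, c⟩
  by_cases h : i = j
  · subst h; fin_cases c <;> simp [Equiv.swap_apply_def]
  · simp [Equiv.swap_apply_def, h]

lemma Q_idem (j : Fin n) (u : H) : Qop T j (Qop T j u) = Qop T j u := by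
  conv_lhs => rw [Qop]
  rw [Q_S', Q_S, map_neg, Q_S]
  module

lemma K_norm (hT : adjT T) {v : H} (hv : inL T v) (j : Fin n) :
    ‖Qop T j (Dop T j v)‖ ≤ 3/4 * ‖v‖ := by
  set u := T (pF j) v with hu
  have hQD : Qop T j (Dop T j v) = Qop T j u + (1/4 : ℂ) • v := by
    conv_rhs => rw [← Q_of_inL hv j]
    rw [Dop_apply, ← hu]
    simp only [Qop, map_add, map_smul, map_sub]
    module
  set g := inner ℂ v u with hg
  set w := inner ℂ v (T (pW j) v) with hw
  have hS := (hv j).1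
  have hS' := (hv j).2
  have h1 : inner ℂ u (T (pS j) u) = g := by
    rw [hu, adj_swap hT, T_mul, T_mul, mul_assoc, perm_FSF, ← T_mul, ← T_mul, ← adj_swap hT, hS]
    simp [hg, hu]
  have h2 : inner ℂ u (T (pS' j) u) = g := by
    rw [hu, adj_swap hT, T_mul, T_mul, mul_assoc, perm_FS'F, ← T_mul, ← T_mul, ← adj_swap hT, hS']
    simp [hg, hu]
  have h3 : inner ℂ u (T (pS j) (T (pS' j) u)) = w := by
    rw [hu, adj_swap hT, T_mul, T_mul, T_mul, mul_assoc, mul_assoc, perm_FSS'F, ← T_mul T (pW j), ← T_mul T (pS j), hS', map_neg, hS]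
    simp [hw]
  have h4 : inner ℂ u u = inner ℂ v v := by
    rw [hu, adj_swap hT, T_swap_swap]
  have h5 : inner ℂ (Qop T j u) (Qop T j u) = (1/4 : ℂ) * (inner ℂ v v - g - g + w) := by
    rw [Q_adj hT, Q_idem, Qop, inner_smul_right, inner_add_right, inner_sub_right, inner_sub_right,
      h1, h2, h3, h4]
  have h6 : inner ℂ (Qop T j u) v = g := by
    rw [Q_adj hT, Q_of_inL hv, hu, adj_swap hT, hg, hu]
  have h7 : inner ℂ v (Qop T j u) = g := by
    rw [← Q_adj hT, Q_of_inL hv]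
  have h8 : inner ℂ (Qop T j (Dop T j v)) (Qop T j (Dop T j v)) =
      (5/16 : ℂ) * inner ℂ v v + (1/4) * w := by
    rw [hQD, inner_add_left, inner_add_right, inner_add_right, h5, inner_smul_left, inner_smul_left,
      inner_smul_right, inner_smul_right, h6, h7]
    rw [show (starRingEnd ℂ) (1/4 : ℂ) = 1/4 by simp [Complex.ext_iff]]
    ring
  have h9 : ‖w‖ ≤ ‖v‖^2 := by
    calc ‖w‖ ≤ ‖v‖ * ‖T (pW j) v‖ := norm_inner_le_norm _ _
      _ = ‖v‖^2 := by rw [norm_T hT]; ring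
  have h10 : ‖Qop T j (Dop T j v)‖^2 ≤ (9/16) * ‖v‖^2 := by
    have e := congrArg norm h8
    rw [inner_self_eq_norm_sq_to_K, inner_self_eq_norm_sq_to_K] at e
    have : ‖((‖Qop T j (Dop T j v)‖ : ℂ))^2‖ = ‖Qop T j (Dop T j v)‖^2 := by
      simp
    calc _ = _ := this.symm
      _ = _ := e
      _ ≤ _ := norm_add_le _ _
      _ = (5/16) * ‖v‖^2 + (1/4) * ‖w‖ := by simp
      _ ≤ _ := by linarith
  rw [← pow_le_pow_iff_left₀ (norm_nonneg _) (by positivity) two_ne_zero]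
  calc _ ≤ _ := h10
    _ = _ := by ring

lemma D_comm_Q {i j : Fin n} (h : i ≠ j) (u : H) :
    Dop T i (Qop T j u) = Qop T j (Dop T i u) := by
  rw [Dop_apply, Dop_apply, Q_comm_site h]
  simp only [Qop, map_add, map_smul]
  module

lemma Dl_comm_Q {l : List (Fin n)} {j : Fin n} (h : j ∉ l) (u : H) :
    (l.map (Dop T)).prod (Qop T j u) = Qop T j ((l.map (Dop T)).prod u) := by
  induction l with
  | nil => simp
  | cons i l ih =>
    simp only [List.mem_cons, not_or] at h
    simp only [List.map_cons, List.prod_cons, Module.End.mul_apply]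
    rw [ih h.2, D_comm_Q (Ne.symm h.1)]

lemma D_adj (hT : adjT T) (j : Fin n) (u v : H) :
    inner ℂ u (Dop T j v) = inner ℂ (Dop T j u) v := by
  rw [Dop_apply, Dop_apply, inner_add_left, inner_add_right, adj_swap hT, inner_smul_left,
    inner_smul_right, show (starRingEnd ℂ) (1/4 : ℂ) = 1/4 by simp [Complex.ext_iff]]

lemma main_norm (hT : adjT T) (l : List (Fin n)) (hl : l.Nodup) (u v : H)
    (hu : inL T u) (hv : inL T v) :
    ‖inner ℂ u ((l.map (Dop T)).prod v)‖ ≤ (3/4)^l.length * (‖u‖ * ‖v‖) := by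
  induction l generalizing u with
  | nil => simpa using norm_inner_le_norm u v
  | cons j l ih =>
    rw [List.nodup_cons] at hl
    simp only [List.map_cons, List.prod_cons, Module.End.mul_apply, List.length_cons]
    rw [D_adj hT]
    conv_lhs => rw [← Q_of_inL hv j]
    rw [Dl_comm_Q hl.1, ← Q_adj hT]
    refine (ih hl.2 _ (K_inL hu j)).trans ?_
    have := K_norm hT hu j
    calc _ ≤ (3/4 : ℝ)^l.length * ((3/4 * ‖u‖) * ‖v‖) := by gcongr
      _ = _ := by ring

lemma main_expand (v : H)
    (hpos : ∀ l : List (Fin n), l.Nodup → 0 ≤ (inner ℂ v (T ((l.map pF).prod) v)).re)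
    (l l' : List (Fin n)) (hl : (l' ++ l).Nodup) :
    (inner ℂ v (T ((l'.map pF).prod * (l.map pF).prod) v)).re ≤
      (inner ℂ v (T ((l'.map pF).prod) ((l.map (Dop T)).prod v))).re := by
  induction l generalizing l' with
  | nil => simp
  | cons j l ih =>
    have h1 := ih (l' ++ [j]) (by simpa using hl)
    have hnd : (l' ++ l).Nodup := hl.sublist (by simp)
    have h2 := ih l' hnd
    have h3 := hpos (l' ++ l) hnd
    simp only [List.map_append, List.prod_append, List.map_cons, List.map_nil, List.prod_cons,
      List.prod_nil, mul_one, Module.End.mul_apply, Dop_apply, map_add, map_smul,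
      inner_add_right, inner_smul_right, Complex.add_re] at h1 h2 h3 ⊢
    rw [T_mul, ← mul_assoc]
    have h4 : ((1/4 : ℂ) * inner ℂ v (T (l'.map pF).prod ((l.map (Dop T)).prod v))).re
        = (1/4) * (inner ℂ v (T (l'.map pF).prod ((l.map (Dop T)).prod v))).re := by
      rw [show (1/4 : ℂ) = ((1/4 : ℝ) : ℂ) by norm_num, Complex.re_ofReal_mul]
    rw [h4]
    linarith

lemma purity_abs (hT : adjT T) (v : H) (hv : inL T v)
    (hpos : ∀ l : List (Fin n), l.Nodup → 0 ≤ (inner ℂ v (T ((l.map pF).prod) v)).re) :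
    (inner ℂ v (T (((List.finRange n).map pF).prod) v)).re ≤ (3/4)^n * ‖v‖^2 := by
  have h1 := main_expand v hpos (List.finRange n) [] (by simpa using List.nodup_finRange n)
  have h2 := main_norm hT _ (List.nodup_finRange n) v v hv hv
  simp only [List.map_nil, List.prod_nil, one_mul, map_one, Module.End.one_apply,
    List.length_finRange] at h1 h2
  refine h1.trans ((Complex.re_le_norm _).trans (h2.trans (le_of_eq (by ring))))

end absrep

section conc
variable {n d : ℕ}

abbrev HX (n d : ℕ) := EuclideanSpace ℂ (Fin n × Fin 4 → Fin d)

def Trep (n d : ℕ) : Equiv.Perm (Fin n × Fin 4) →* Module.End ℂ (HX n d) where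
  toFun p :=
    { toFun := fun v => WithLp.toLp 2 (fun x => v (x ∘ p))
      map_add' := fun u v => by ext x; simp
      map_smul' := fun c v => by ext x; simp }
  map_one' := by ext v x; simp
  map_mul' p q := by ext v x; simp [Function.comp_assoc]

lemma Trep_apply (p : Equiv.Perm (Fin n × Fin 4)) (v : HX n d) (x : Fin n × Fin 4 → Fin d) :
    Trep n d p v x = v (x ∘ p) := rfl

lemma Trep_adj : adjT (Trep n d) := by
  intro p u v
  simp only [PiLp.inner_apply, Trep_apply]
  rw [← Equiv.sum_comp (p.arrowCongr (Equiv.refl (Fin d)))]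
  apply Finset.sum_congr rfl
  intro x _
  have h1 : ((p.arrowCongr (Equiv.refl (Fin d))) x) ∘ p = x := by
    ext i; simp [Equiv.arrowCongr]
  have h2 : ((p.arrowCongr (Equiv.refl (Fin d))) x) = x ∘ (p⁻¹ : Equiv.Perm _) := by
    ext i; simp [Equiv.arrowCongr]
  rw [h1, h2]

abbrev V (n d : ℕ) := Fin n → Fin d

def psi2 (ψ : V n d × V n d → ℂ) : HX n d :=
  WithLp.toLp 2 (fun x => ψ (fun j => x (j,0), fun j => x (j,1)) * ψ (fun j => x (j,2), fun j => x (j,3)))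

lemma psi2_apply (ψ : V n d × V n d → ℂ) (x) : psi2 ψ x =
  ψ (fun j => x (j,0), fun j => x (j,1)) * ψ (fun j => x (j,2), fun j => x (j,3)) := rfl

def isAnti (ψ : V n d × V n d → ℂ) : Prop := ∀ (j : Fin n) (a b : V n d),
  ψ (Function.update a j (b j), Function.update b j (a j)) = - ψ (a, b)

lemma psi2_inL {ψ : V n d × V n d → ℂ} (h : isAnti ψ) : inL (Trep n d) (psi2 ψ) := by
  intro j
  constructor
  · ext x
    rw [Trep_apply, psi2_apply]
    simp only [PiLp.neg_apply, psi2_apply]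
    rw [← neg_mul, ← h j]
    congr 3 <;> (ext i; simp only [Function.comp, Function.update_apply]; by_cases hi : i = j)
    all_goals first
      | (subst hi; simp [Equiv.swap_apply_def]; done)
      | (simp [hi, Equiv.swap_apply_def]; done)
  · ext x
    rw [Trep_apply, psi2_apply]
    simp only [PiLp.neg_apply, psi2_apply]
    rw [← mul_neg, ← h j]
    congr 3 <;> (ext i; simp only [Function.comp, Function.update_apply]; by_cases hi : i = j)
    all_goals first
      | (subst hi; simp [Equiv.swap_apply_def]; done)
      | (simp [hi, Equiv.swap_apply_def]; done)

lemma prod_pF_apply (l : List (Fin n)) (hl : l.Nodup) (i : Fin n) (c : Fin 4) :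
    (l.map pF).prod (i, c) = if i ∈ l then (i, Equiv.swap (0 : Fin 4) 2 c) else (i, c) := by
  induction l with
  | nil => simp
  | cons j l ih =>
    rw [List.nodup_cons] at hl
    simp only [List.map_cons, List.prod_cons, Equiv.Perm.mul_apply, ih hl.2, List.mem_cons]
    by_cases hij : i = j
    · subst hij
      simp only [hl.1, if_false, true_or, if_true]
      fin_cases c <;> simp [Equiv.swap_apply_def]
    · simp only [hij, false_or]
      split_ifs <;> (rw [Equiv.swap_apply_of_ne_of_ne] <;> simp [hij])

def quadEquiv (n d : ℕ) : (Fin n × Fin 4 → Fin d) ≃ (V n d × V n d) × (V n d × V n d) where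
  toFun x := ((fun j => x (j,0), fun j => x (j,1)), (fun j => x (j,2), fun j => x (j,3)))
  invFun q := fun y => ![q.1.1 y.1, q.1.2 y.1, q.2.1 y.1, q.2.2 y.1] y.2
  left_inv x := by
    ext ⟨j, c⟩; fin_cases c <;> rfl
  right_inv q := by rfl

def mix (l : List (Fin n)) (a a' : V n d) : V n d := fun i => if i ∈ l then a' i else a i

lemma inner_psi2 (ψ : V n d × V n d → ℂ) (l : List (Fin n)) (hl : l.Nodup) :
    inner ℂ (psi2 ψ) (Trep n d ((l.map pF).prod) (psi2 ψ)) =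
      ∑ p : V n d × V n d, ∑ q : V n d × V n d,
        star (ψ p) * star (ψ q) * (ψ (mix l p.1 q.1, p.2) * ψ (mix l q.1 p.1, q.2)) := by
  rw [PiLp.inner_apply, ← Fintype.sum_prod_type', ← Equiv.sum_comp (quadEquiv n d)]
  apply Finset.sum_congr rfl
  intro x _
  rw [Trep_apply, psi2_apply, psi2_apply]
  simp only [RCLike.inner_apply, map_mul, quadEquiv, Equiv.coe_fn_mk, Function.comp,
    prod_pF_apply l hl]
  rw [mul_comm]
  congr 1
  congr 3
  · ext i; simp only [mix]; split_ifs <;> (simp; rfl)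
  · ext i; split_ifs <;> (simp [Equiv.swap_apply_def]; rfl)
  · ext i; simp only [mix]; split_ifs <;> (simp; rfl)
  · ext i; split_ifs <;> (simp [Equiv.swap_apply_def]; rfl)

lemma pos_aux {A B C : Type*} [Fintype A] [Fintype B] [Fintype C] (c : A → B → C → ℂ) :
    0 ≤ (∑ s, ∑ r, ∑ b, ∑ s', ∑ r', ∑ b',
      star (c s r b) * star (c s' r' b') * (c s' r b * c s r' b')).re := by
  have : (∑ s, ∑ r, ∑ b, ∑ s', ∑ r', ∑ b',
      star (c s r b) * star (c s' r' b') * (c s' r b * c s r' b')) =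
      ∑ s, ∑ s', star (∑ r, ∑ b, star (c s r b) * c s' r b) * (∑ r, ∑ b, star (c s r b) * c s' r b) := by
    apply Finset.sum_congr rfl; intro s _
    have : ∀ r, ∑ b, ∑ s', ∑ r', ∑ b',
      star (c s r b) * star (c s' r' b') * (c s' r b * c s r' b') = ∑ s', ∑ b, ∑ r', ∑ b',
      star (c s r b) * star (c s' r' b') * (c s' r b * c s r' b') := fun r => Finset.sum_comm
    simp_rw [this]
    rw [Finset.sum_comm]
    apply Finset.sum_congr rfl; intro s' _
    simp only [star_sum, Finset.sum_mul, Finset.mul_sum, star_mul', star_star]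
    refine Finset.sum_congr rfl fun r _ => Finset.sum_congr rfl fun b _ =>
      Finset.sum_congr rfl fun r' _ => Finset.sum_congr rfl fun b' _ => ?_
    ring
  rw [this]
  simp only [Complex.re_sum]
  refine Finset.sum_nonneg fun s _ => Finset.sum_nonneg fun s' _ => ?_
  rw [Complex.star_def, mul_comm, Complex.mul_conj]
  simpa using Complex.normSq_nonneg _

lemma inner_pos (ψ : V n d × V n d → ℂ) (l : List (Fin n)) (hl : l.Nodup) :
    0 ≤ (inner ℂ (psi2 ψ) (Trep n d ((l.map pF).prod) (psi2 ψ))).re := by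
  rw [inner_psi2 ψ l hl]
  let e := Equiv.piEquivPiSubtypeProd (fun i => i ∈ l) (fun _ : Fin n => Fin d)
  have h := pos_aux (fun s r b => ψ (e.symm (s, r), b))
  convert h using 2
  simp only [Fintype.sum_prod_type]
  rw [← Equiv.sum_comp e.symm, Fintype.sum_prod_type]
  refine Finset.sum_congr rfl fun s _ => Finset.sum_congr rfl fun r _ =>
      Finset.sum_congr rfl fun b _ => ?_
  rw [← Equiv.sum_comp e.symm, Fintype.sum_prod_type]
  refine Finset.sum_congr rfl fun s' _ => Finset.sum_congr rfl fun r' _ =>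
      Finset.sum_congr rfl fun b' _ => ?_
  have hm : ∀ s r s' r', mix l (e.symm (s,r)) (e.symm (s',r')) = e.symm (s', r) := by
    intro s r s' r'
    ext i
    simp only [mix, e, Equiv.piEquivPiSubtypeProd, Equiv.coe_fn_symm_mk]
    split_ifs <;> rfl
  rw [hm, hm]

lemma psi2_norm (ψ : V n d × V n d → ℂ) (h : ∑ x, Complex.normSq (ψ x) = 1) :
    ‖psi2 ψ‖^2 = 1 := by
  rw [EuclideanSpace.norm_sq_eq, ← Equiv.sum_comp (quadEquiv n d).symm, Fintype.sum_prod_type]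
  have : ∀ p q : V n d × V n d, ‖psi2 ψ ((quadEquiv n d).symm (p,q))‖^2 =
      Complex.normSq (ψ p) * Complex.normSq (ψ q) := by
    intro p q
    have : psi2 ψ ((quadEquiv n d).symm (p,q)) = ψ p * ψ q := rfl
    rw [this, norm_mul, mul_pow, Complex.normSq_eq_norm_sq, Complex.normSq_eq_norm_sq]
  simp_rw [this, ← Finset.mul_sum, h]
  simpa using h

lemma purity_bound (ψ : V n d × V n d → ℂ) (h : ∑ x, Complex.normSq (ψ x) = 1) (ha : isAnti ψ) :
    (((ptraceSnd (Matrix.vecMulVec ψ (star ψ))) * (ptraceSnd (Matrix.vecMulVec ψ (star ψ)))).trace).re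
      ≤ (3/4)^n := by
  have h1 := purity_abs Trep_adj (psi2 ψ) (psi2_inL ha) (inner_pos ψ)
  rw [psi2_norm ψ h, mul_one, inner_psi2 ψ _ (List.nodup_finRange n)] at h1
  convert h1 using 2
  have hm : ∀ a a' : V n d, mix (List.finRange n) a a' = a' := by
    intro a a'; ext i; simp [mix]
  simp only [Matrix.trace, Matrix.diag, Matrix.mul_apply, ptraceSnd, Matrix.of_apply,
    Matrix.vecMulVec_apply, hm, Fintype.sum_prod_type, Pi.star_apply]
  apply Finset.sum_congr rfl; intro a _
  rw [Finset.sum_comm]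
  apply Finset.sum_congr rfl; intro a' _
  simp only [Finset.sum_mul, Finset.mul_sum]
  refine Finset.sum_congr rfl fun b _ => Finset.sum_congr rfl fun b' _ => ?_
  ring

end conc

section entropy
variable {ι : Type*} [Fintype ι] [DecidableEq ι]

lemma trace_sq_eig {ρ : Matrix ι ι ℂ} (h : ρ.IsHermitian) :
    (ρ * ρ).trace.re = ∑ i, (h.eigenvalues i)^2 := by
  have e := h.spectral_theorem
  have : ρ * ρ = Unitary.conjStarAlgAut ℂ _ h.eigenvectorUnitary
      (Matrix.diagonal (RCLike.ofReal ∘ h.eigenvalues) *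
        Matrix.diagonal (RCLike.ofReal ∘ h.eigenvalues)) := by
    rw [map_mul, ← e]
  rw [this, Unitary.conjStarAlgAut_apply, Matrix.trace_mul_comm, ← mul_assoc]
  simp [Matrix.trace, Complex.re_sum, sq]

lemma sum_eig {ρ : Matrix ι ι ℂ} (h : ρ.IsHermitian) (ht : ρ.trace = 1) :
    ∑ i, h.eigenvalues i = 1 := by
  have := h.trace_eq_sum_eigenvalues
  rw [ht] at this
  have h2 := congrArg Complex.re this
  simpa using h2.symm

lemma ent_lower {ρ : Matrix ι ι ℂ} (h : ρ.PosSemidef) (ht : ρ.trace = 1) {c : ℝ} (hc : 0 < c)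
    (hp : (ρ * ρ).trace.re ≤ c) : -Real.logb 2 c ≤ vnEntropy ρ := by
  rw [vnEntropy, dif_pos h.1, neg_le_neg_iff]
  rw [trace_sq_eig h.1] at hp
  have h1 := sum_eig h.1 ht
  have h2 := h.eigenvalues_nonneg
  set lam := h.1.eigenvalues
  have key : ∀ i, lam i * Real.log (lam i) ≤ lam i ^ 2 / c - lam i + lam i * Real.log c := by
    intro i
    rcases (h2 i).eq_or_lt with h0 | h0
    · rw [← h0]; simp
    · have := Real.log_le_sub_one_of_pos (div_pos h0 hc)
      rw [Real.log_div h0.ne' hc.ne'] at this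
      have := mul_le_mul_of_nonneg_left this h0.le
      have e : lam i * (lam i / c - 1) = lam i^2/c - lam i := by ring
      nlinarith
  have hl2 : 0 < Real.log 2 := Real.log_pos (by norm_num)
  simp only [Real.logb, mul_div_assoc']
  rw [← Finset.sum_div]
  apply div_le_div_of_nonneg_right _ hl2.le
  calc _ ≤ ∑ i, (lam i ^ 2 / c - lam i + lam i * Real.log c) := Finset.sum_le_sum fun i _ => key i
    _ = (∑ i, lam i ^2) / c - 1 + Real.log c := by
      rw [Finset.sum_add_distrib, Finset.sum_sub_distrib, ← Finset.sum_div, ← Finset.sum_mul, h1, one_mul]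
    _ ≤ _ := by
      have := (div_le_one hc).2 hp
      linarith

lemma ent_upper {ρ : Matrix ι ι ℂ} (h : ρ.PosSemidef) (ht : ρ.trace = 1) :
    vnEntropy ρ ≤ Real.logb 2 (Fintype.card ι) := by
  rw [vnEntropy, dif_pos h.1]
  have h1 := sum_eig h.1 ht
  have h2 := h.eigenvalues_nonneg
  set lam := h.1.eigenvalues
  have hne : Nonempty ι := by
    by_contra hne
    rw [not_nonempty_iff] at hne
    simp at h1
  have hN : (0:ℝ) < Fintype.card ι := by exact_mod_cast Fintype.card_pos
  have key : ∀ i, -(lam i * Real.log (lam i)) ≤ 1 / (Fintype.card ι : ℝ) - lam i + lam i * Real.log (Fintype.card ι) := by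
    intro i
    rcases (h2 i).eq_or_lt with h0 | h0
    · rw [← h0]; simp
    · have := Real.log_le_sub_one_of_pos (div_pos one_pos (mul_pos h0 hN))
      rw [Real.log_div one_ne_zero (mul_pos h0 hN).ne', Real.log_mul h0.ne' hN.ne', Real.log_one] at this
      have := mul_le_mul_of_nonneg_left this h0.le
      have e : lam i * (1 / (lam i * Fintype.card ι) - 1) = 1 / (Fintype.card ι : ℝ) - lam i := by
        field_simp
      nlinarith
  have hl2 : 0 < Real.log 2 := Real.log_pos (by norm_num)
  simp only [Real.logb, mul_div_assoc']
  rw [← Finset.sum_div, ← neg_div]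
  apply div_le_div_of_nonneg_right _ hl2.le
  rw [← Finset.sum_neg_distrib]
  calc _ ≤ ∑ i, (1 / (Fintype.card ι : ℝ) - lam i + lam i * Real.log (Fintype.card ι)) := Finset.sum_le_sum fun i _ => key i
    _ = _ := by
      rw [Finset.sum_add_distrib, Finset.sum_sub_distrib, ← Finset.sum_mul, h1, one_mul]
      simp [hN.ne']

lemma spectral_ensemble {ρ : Matrix ι ι ℂ} (h : ρ.PosSemidef) (ht : ρ.trace = 1) :
    ∃ (k : ℕ) (p : Fin k → ℝ) (ψ : Fin k → (ι → ℂ)),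
    (∀ i, 0 ≤ p i) ∧ (∑ i, p i = 1) ∧
    (∀ i, ∑ x, Complex.normSq (ψ i x) = 1) ∧
    (∑ i, p i • Matrix.vecMulVec (ψ i) (star (ψ i)) = ρ) := by
  let e := (Fintype.equivFin ι).symm
  let U : Matrix ι ι ℂ := h.1.eigenvectorUnitary
  refine ⟨Fintype.card ι, fun i => h.1.eigenvalues (e i), fun i x => U x (e i),
    fun i => h.eigenvalues_nonneg _, ?_, ?_, ?_⟩
  · rw [Equiv.sum_comp e h.1.eigenvalues]; exact sum_eig h.1 ht
  · intro i
    have hU : star U * U = 1 := Unitary.coe_star_mul_self h.1.eigenvectorUnitary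
    have := congrFun (congrFun hU (e i)) (e i)
    rw [Matrix.mul_apply, Matrix.one_apply_eq] at this
    have h2 := congrArg Complex.re this
    simp only [Matrix.star_apply, Complex.re_sum, Complex.one_re] at h2
    rw [← h2]
    refine Finset.sum_congr rfl fun x _ => ?_
    rw [Complex.star_def, mul_comm, Complex.mul_conj, Complex.ofReal_re]
  · rw [Equiv.sum_comp e (fun i => h.1.eigenvalues i • Matrix.vecMulVec (fun x => U x i) (star (fun x => U x i)))]
    conv_rhs => rw [h.1.spectral_theorem, Unitary.conjStarAlgAut_apply]
    ext x y
    rw [Matrix.mul_apply, Matrix.sum_apply]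
    refine Finset.sum_congr rfl fun i _ => ?_
    simp only [Matrix.smul_apply, Matrix.vecMulVec_apply, Matrix.mul_diagonal, Pi.star_apply,
      Function.comp, Matrix.star_apply, Complex.real_smul]
    change _ = U x i * _ * star (U y i)
    simp only [Complex.coe_algebraMap, RCLike.ofReal_eq_complex_ofReal]
    ring

end entropy

section pure
variable {α β : Type*} [Fintype α] [DecidableEq α] [Fintype β] [DecidableEq β]

lemma ptrace_eq (ψ : α × β → ℂ) : ptraceSnd (Matrix.vecMulVec ψ (star ψ)) =
    (Matrix.of fun a b => ψ (a,b)) * (Matrix.of fun a b => ψ (a,b)).conjTranspose := by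
  ext a a'
  simp [ptraceSnd, Matrix.mul_apply, Matrix.vecMulVec_apply]

lemma ptrace_psd (ψ : α × β → ℂ) : (ptraceSnd (Matrix.vecMulVec ψ (star ψ))).PosSemidef := by
  rw [ptrace_eq]; exact Matrix.posSemidef_self_mul_conjTranspose _

lemma ptrace_trace (ψ : α × β → ℂ) (h : ∑ x, Complex.normSq (ψ x) = 1) :
    (ptraceSnd (Matrix.vecMulVec ψ (star ψ))).trace = 1 := by
  simp only [ptraceSnd, Matrix.trace, Matrix.diag, Matrix.of_apply, Matrix.vecMulVec_apply,
    Pi.star_apply, Complex.star_def, Complex.mul_conj]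
  rw [← Fintype.sum_prod_type' (f := fun a b => ((Complex.normSq (ψ (a,b)) : ℝ) : ℂ))]
  exact_mod_cast h
end pure

section alpha
variable {n d : ℕ}

def tp (n : ℕ) (M : Matrix (Fin d × Fin d) (Fin d × Fin d) ℂ) :
    Matrix (V n d × V n d) (V n d × V n d) ℂ :=
  Matrix.of fun p q => ∏ i : Fin n, M (p.1 i, p.2 i) (q.1 i, q.2 i)

lemma sum_tp (f : Fin n → Fin d × Fin d → ℂ) :
    ∑ p : V n d × V n d, ∏ i, f i (p.1 i, p.2 i) = ∏ i, ∑ x, f i x := by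
  rw [Finset.prod_univ_sum, Fintype.piFinset_univ]
  exact (Equiv.sum_comp (Equiv.arrowProdEquivProdArrow (Fin n) (fun _ => Fin d) (fun _ => Fin d)).symm
    (fun x : Fin n → Fin d × Fin d => ∏ i, f i (x i)))

lemma tp_mul (M N : Matrix (Fin d × Fin d) (Fin d × Fin d) ℂ) : tp n (M * N) = tp n M * tp n N := by
  ext p q
  simp only [tp, Matrix.of_apply, Matrix.mul_apply]
  rw [← sum_tp (fun i x => M (p.1 i, p.2 i) x * N x (q.1 i, q.2 i))]
  simp only [Finset.prod_mul_distrib]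

lemma tp_conj (M : Matrix (Fin d × Fin d) (Fin d × Fin d) ℂ) :
    tp n M.conjTranspose = (tp n M).conjTranspose := by
  ext p q; simp [tp]

lemma tp_trace (M : Matrix (Fin d × Fin d) (Fin d × Fin d) ℂ) : (tp n M).trace = M.trace ^ n := by
  simp only [tp, Matrix.trace, Matrix.diag, Matrix.of_apply]
  rw [sum_tp (fun _ x => M x x)]; simp

def Fm (d : ℕ) : Matrix (Fin d × Fin d) (Fin d × Fin d) ℂ :=
  Matrix.of fun p q => if p.swap = q then 1 else 0

lemma Fm_sq : Fm d * Fm d = 1 := by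
  ext p q
  simp only [Fm, Matrix.mul_apply, Matrix.of_apply, Matrix.one_apply, ite_mul, one_mul, zero_mul, Finset.sum_ite_eq, Finset.mem_univ, if_true, Prod.swap_swap]

lemma Fm_herm : (Fm d).conjTranspose = Fm d := by
  ext p q
  simp only [Fm, Matrix.conjTranspose_apply, Matrix.of_apply]
  by_cases h : q.swap = p
  · subst h; simp
  · have : ¬ (p.swap = q) := by rintro rfl; simp at h
    simp [h, this]

lemma asym_eq : asymProj d = (1/2 : ℂ) • (1 - Fm d) := by
  ext p q
  rcases p with ⟨a, b⟩; rcases q with ⟨a', b'⟩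
  simp only [asymProj, Fm, Matrix.smul_apply, Matrix.sub_apply, Matrix.of_apply, Matrix.one_apply,
    Prod.swap_prod_mk, Prod.mk.injEq, smul_eq_mul]
  congr 2
  simp only [and_comm]

lemma asym_herm : (asymProj d).conjTranspose = asymProj d := by
  rw [asym_eq, Matrix.conjTranspose_smul, Matrix.conjTranspose_sub, Fm_herm]
  simp

lemma asym_idem : asymProj d * asymProj d = asymProj d := by
  rw [asym_eq, smul_mul_smul_comm, sub_mul, mul_sub, mul_sub, Fm_sq]
  simp only [mul_one, one_mul]
  module

lemma alpha_trace (hd : 2 ≤ d) : (antisymState d).trace = 1 := by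
  have hF : (Fm d).trace = d := by
    simp only [Matrix.trace, Matrix.diag, Fm, Matrix.of_apply, Fintype.sum_prod_type, Prod.swap_prod_mk, Prod.mk.injEq]
    simp [and_comm, Finset.sum_ite_eq, ite_and]
  rw [antisymState, Matrix.trace_smul, asym_eq, Matrix.trace_smul, Matrix.trace_sub, hF, Matrix.trace_one]
  have hpos : 0 < d.choose 2 := Nat.choose_pos hd
  have h2 := Nat.cast_choose_two ℂ d
  have h3 : (d.choose 2 : ℂ) ≠ 0 := by exact_mod_cast hpos.ne'
  have h4 : (1/2 : ℂ) * ((d:ℂ) * d - d) = d.choose 2 := by rw [h2]; ring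
  simp only [Fintype.card_prod, Fintype.card_fin, Nat.cast_mul, smul_eq_mul]
  rw [h4]; field_simp

lemma alphaPow_psd : (alphaPow d n).PosSemidef := by
  have e : alphaPow d n = tp n (antisymState d) := rfl
  have hB : antisymState d = (((Real.sqrt (1 / (d.choose 2 : ℝ)) : ℝ) : ℂ) • asymProj d).conjTranspose *
      (((Real.sqrt (1 / (d.choose 2 : ℝ)) : ℝ) : ℂ) • asymProj d) := by
    rw [Matrix.conjTranspose_smul, asym_herm, smul_mul_smul_comm, asym_idem, Complex.star_def,
      Complex.conj_ofReal, ← Complex.ofReal_mul, Real.mul_self_sqrt (by positivity), antisymState]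
    push_cast
    rfl
  rw [e, hB, tp_mul, tp_conj]
  exact Matrix.posSemidef_conjTranspose_mul_self _

lemma alphaPow_trace (hd : 2 ≤ d) : (alphaPow d n).trace = 1 := by
  have e : alphaPow d n = tp n (antisymState d) := rfl
  rw [e, tp_trace, alpha_trace hd, one_pow]

def sw (j : Fin n) (p : V n d × V n d) : V n d × V n d :=
  (Function.update p.1 j (p.2 j), Function.update p.2 j (p.1 j))

lemma asym_flip_right (a b a' b' : Fin d) : antisymState d (a, b) (b', a') = - antisymState d (a,b) (a',b') := by
  simp [antisymState, asymProj]; ring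

lemma asym_flip_left (a b a' b' : Fin d) : antisymState d (b, a) (a', b') = - antisymState d (a,b) (a',b') := by
  simp only [antisymState, asymProj, Matrix.smul_apply, Matrix.of_apply, smul_eq_mul]
  simp only [and_comm]; ring

lemma alphaPow_sw_right (j : Fin n) (p q : V n d × V n d) :
    alphaPow d n p (sw j q) = - alphaPow d n p q := by
  simp only [alphaPow, Matrix.of_apply]
  rw [← Finset.mul_prod_erase _ _ (Finset.mem_univ j), ← Finset.mul_prod_erase Finset.univ (fun i => antisymState d (p.1 i, p.2 i) (q.1 i, q.2 i)) (Finset.mem_univ j), ← neg_mul]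
  congr 1
  · simp only [sw, Function.update_self]
    exact asym_flip_right _ _ _ _
  · refine Finset.prod_congr rfl fun i hi => ?_
    have := Finset.ne_of_mem_erase hi
    simp [sw, Function.update_of_ne this]

lemma alphaPow_sw_left (j : Fin n) (p q : V n d × V n d) :
    alphaPow d n (sw j p) q = - alphaPow d n p q := by
  simp only [alphaPow, Matrix.of_apply]
  rw [← Finset.mul_prod_erase _ _ (Finset.mem_univ j), ← Finset.mul_prod_erase Finset.univ (fun i => antisymState d (p.1 i, p.2 i) (q.1 i, q.2 i)) (Finset.mem_univ j), ← neg_mul]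
  congr 1
  · simp only [sw, Function.update_self]
    exact asym_flip_left _ _ _ _
  · refine Finset.prod_congr rfl fun i hi => ?_
    have := Finset.ne_of_mem_erase hi
    simp [sw, Function.update_of_ne this]

lemma ens_anti {k : ℕ} (p : Fin k → ℝ) (ψ : Fin k → (V n d × V n d → ℂ)) (hp : ∀ i, 0 ≤ p i)
    (hs : ∑ i, p i • Matrix.vecMulVec (ψ i) (star (ψ i)) = alphaPow d n) (i : Fin k)
    (hi : p i ≠ 0) : isAnti (ψ i) := by
  intro j a b
  have he : ∀ x y, ∑ i, (p i : ℂ) * (ψ i x * star (ψ i y)) = alphaPow d n x y := by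
    intro x y
    rw [← hs, Matrix.sum_apply]
    simp [Matrix.vecMulVec_apply]
  set x : V n d × V n d := (a, b) with hx
  have h0 : ∑ i, (p i : ℂ) * ((ψ i x + ψ i (sw j x)) * star (ψ i x + ψ i (sw j x))) = 0 := by
    have : ∀ i, (p i : ℂ) * ((ψ i x + ψ i (sw j x)) * star (ψ i x + ψ i (sw j x))) =
      (p i : ℂ) * (ψ i x * star (ψ i x)) + (p i : ℂ) * (ψ i x * star (ψ i (sw j x))) +
      ((p i : ℂ) * (ψ i (sw j x) * star (ψ i x)) + (p i : ℂ) * (ψ i (sw j x) * star (ψ i (sw j x)))) := by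
      intro i; rw [star_add]; ring
    simp_rw [this, Finset.sum_add_distrib, he, alphaPow_sw_right]
    ring
  have h1 : ∑ i, p i * Complex.normSq (ψ i x + ψ i (sw j x)) = 0 := by
    simp only [Complex.star_def, Complex.mul_conj] at h0
    exact_mod_cast h0
  rw [Finset.sum_eq_zero_iff_of_nonneg (fun i _ => mul_nonneg (hp i) (Complex.normSq_nonneg _))] at h1
  have h2 := (mul_eq_zero.1 (h1 i (Finset.mem_univ i))).resolve_left hi
  rw [Complex.normSq_eq_zero] at h2
  change ψ i (sw j x) = _
  linear_combination h2

lemma EoF_elem_lower {k : ℕ} (p : Fin k → ℝ) (ψ : Fin k → (V n d × V n d → ℂ)) (hp : ∀ i, 0 ≤ p i)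
    (hp1 : ∑ i, p i = 1) (hn : ∀ i, ∑ x, Complex.normSq (ψ i x) = 1)
    (hs : ∑ i, p i • Matrix.vecMulVec (ψ i) (star (ψ i)) = alphaPow d n) :
    n * Real.logb 2 (4/3) ≤ ∑ i, p i * vnEntropy (ptraceSnd (Matrix.vecMulVec (ψ i) (star (ψ i)))) := by
  calc n * Real.logb 2 (4/3) = ∑ i, p i * (n * Real.logb 2 (4/3)) := by
        rw [← Finset.sum_mul, hp1, one_mul]
    _ ≤ _ := by
      refine Finset.sum_le_sum fun i _ => ?_
      by_cases hi : p i = 0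
      · simp [hi]
      · apply mul_le_mul_of_nonneg_left _ (hp i)
        have h1 := ent_lower (ptrace_psd (ψ i)) (ptrace_trace _ (hn i)) (c := (3/4)^n) (by positivity)
          (purity_bound (ψ i) (hn i) (ens_anti p ψ hp hs i hi))
        refine le_trans (le_of_eq ?_) h1
        rw [Real.logb_pow, show (4/3 : ℝ) = (3/4)⁻¹ by norm_num, Real.logb_inv]
        ring

lemma EoF_lower (hd : 2 ≤ d) : n * Real.logb 2 (4/3) ≤ EoF (alphaPow d n) := by
  apply le_csInf
  · obtain ⟨k, p, ψ, h1, h2, h3, h4⟩ := spectral_ensemble (alphaPow_psd (d := d) (n := n)) (alphaPow_trace hd)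
    exact ⟨_, k, p, ψ, h1, h2, h3, h4, rfl⟩
  · rintro E ⟨k, p, ψ, h1, h2, h3, h4, rfl⟩
    exact EoF_elem_lower p ψ h1 h2 h3 h4

lemma EoF_upper (hd : 2 ≤ d) : EoF (alphaPow d n) ≤ n * Real.logb 2 d := by
  obtain ⟨k, p, ψ, h1, h2, h3, h4⟩ := spectral_ensemble (alphaPow_psd (d := d) (n := n)) (alphaPow_trace hd)
  have hle : EoF (alphaPow d n) ≤
      ∑ i, p i * vnEntropy (ptraceSnd (Matrix.vecMulVec (ψ i) (star (ψ i)))) := by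
    apply csInf_le
    · refine ⟨n * Real.logb 2 (4/3), ?_⟩
      rintro E ⟨k, p, ψ, h1, h2, h3, h4, rfl⟩
      exact EoF_elem_lower p ψ h1 h2 h3 h4
    · exact ⟨k, p, ψ, h1, h2, h3, h4, rfl⟩
  refine hle.trans ?_
  · calc _ ≤ ∑ i, p i * (n * Real.logb 2 d) := by
          refine Finset.sum_le_sum fun i _ => mul_le_mul_of_nonneg_left ?_ (h1 i)
          refine (ent_upper (ptrace_psd (ψ i)) (ptrace_trace _ (h3 i))).trans (le_of_eq ?_)
          simp [Real.logb_pow]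
      _ = _ := by rw [← Finset.sum_mul, h2, one_mul]

end alpha

/-- For every integer `d ≥ 2`,
`liminf_{n→∞} (1/n) E_F(α_d^{⊗n}) ≥ log₂(4/3)`
(the paper's lower bound `E_C(α_d) ≥ log₂(4/3)` on the entanglement cost). -/
theorem antisym_entanglement_cost_lower_bound (d : ℕ) (hd : 2 ≤ d) :
    Real.logb 2 (4 / 3) ≤
      Filter.liminf (fun n : ℕ => EoF (alphaPow d n) / n) Filter.atTop := by
  apply Filter.le_liminf_of_le
  · refine Filter.IsBoundedUnder.isCoboundedUnder_ge ⟨Real.logb 2 d, ?_⟩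
    rw [Filter.eventually_map]
    filter_upwards [Filter.eventually_gt_atTop 0] with n hn
    have hn' : (0:ℝ) < n := by exact_mod_cast hn
    rw [div_le_iff₀ hn', mul_comm]
    exact EoF_upper hd
  · filter_upwards [Filter.eventually_gt_atTop 0] with n hn
    have hn' : (0:ℝ) < n := by exact_mod_cast hn
    rw [le_div_iff₀ hn', mul_comm]
    exact EoF_lower hd

end
end

section
/- For all integers d ≥ 2 and n ≥ 1, E_F(α_d^{⊗n}) ≥ n·log₂(4/3), where α_d^{⊗n} is viewed as a bipartite state on ((ℂ^d)^{⊗n})_A ⊗ ((ℂ^d)^{⊗n})_B by grouping the n first tensor factors on one side and the n second tensor factors on the other. -/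
open scoped BigOperators
open Classical
open scoped ComplexOrder

noncomputable section

section Helpers

/-- Tensor power of a matrix. -/
def tpow {X : Type*} (n : ℕ) (M : Matrix X X ℂ) : Matrix (Fin n → X) (Fin n → X) ℂ :=
  Matrix.of fun x y => ∏ i, M (x i) (y i)

lemma tpow_mul {X : Type*} [Fintype X] (n : ℕ) (M N : Matrix X X ℂ) :
    tpow n (M * N) = tpow n M * tpow n N := by
  ext x y
  simp only [tpow, Matrix.of_apply, Matrix.mul_apply]
  rw [Fintype.prod_sum]
  simp only [Finset.prod_mul_distrib]

lemma tpow_conjTranspose {X : Type*} (n : ℕ) (M : Matrix X X ℂ) :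
    tpow n (M.conjTranspose) = (tpow n M).conjTranspose := by
  ext x y
  simp [tpow, Matrix.conjTranspose_apply]

lemma sum_fin_succ {X : Type*} [Fintype X] {R : Type*} [AddCommMonoid R] (n : ℕ)
    (f : (Fin (n + 1) → X) → R) :
    ∑ x, f x = ∑ a : X, ∑ y : Fin n → X, f (Fin.cons a y) := by
  rw [← Fintype.sum_prod_type']
  exact ((Fin.consEquiv (fun _ : Fin (n+1) => X)).sum_comp f).symm

lemma tpow_bound {X : Type*} [Fintype X] (c : ℝ) (hc : 0 ≤ c) (K : Matrix X X ℂ)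
    (hK : ∀ v : X → ℂ, ∑ x, Complex.normSq ((K.mulVec v) x) ≤ c * ∑ x, Complex.normSq (v x))
    (n : ℕ) : ∀ v : (Fin n → X) → ℂ,
    ∑ x, Complex.normSq (((tpow n K).mulVec v) x) ≤ c ^ n * ∑ x, Complex.normSq (v x) := by
  induction n with
  | zero => intro v; simp [tpow, Matrix.mulVec, dotProduct]
  | succ n ih =>
    intro v
    set w : X → (Fin n → X) → ℂ := fun a => (tpow n K).mulVec (fun y => v (Fin.cons a y)) with hw
    have h1 : ∀ a y, (tpow (n+1) K).mulVec v (Fin.cons a y) = K.mulVec (fun a' => w a' y) a := by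
      intro a y
      simp only [Matrix.mulVec, dotProduct, hw, tpow, Matrix.of_apply]
      rw [sum_fin_succ]
      refine Finset.sum_congr rfl fun a' _ => ?_
      rw [Finset.mul_sum]
      refine Finset.sum_congr rfl fun y' _ => ?_
      rw [Fin.prod_univ_succ]
      simp [mul_assoc]
    rw [sum_fin_succ, sum_fin_succ]
    simp only [h1]
    rw [Finset.sum_comm]
    calc _ ≤ ∑ y : Fin n → X, c * ∑ a, Complex.normSq (w a y) :=
          Finset.sum_le_sum fun y _ => hK _
      _ = c * ∑ a, ∑ y : Fin n → X, Complex.normSq (w a y) := by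
          rw [← Finset.mul_sum, Finset.sum_comm]
      _ ≤ c * ∑ a, (c ^ n * ∑ y : Fin n → X, Complex.normSq (v (Fin.cons a y))) := by
          gcongr with a _
          exact ih _
      _ = _ := by rw [← Finset.mul_sum]; ring

/-- permutation operator -/
def permU {X : Type*} [DecidableEq X] (σ : Equiv.Perm X) : Matrix X X ℂ :=
  Matrix.of fun x y => if σ x = y then 1 else 0

lemma permU_mul {X : Type*} [Fintype X] [DecidableEq X] (σ τ : Equiv.Perm X) :
    permU σ * permU τ = permU (τ * σ) := by
  ext x y
  simp only [permU, Matrix.mul_apply, Matrix.of_apply, ite_mul, one_mul, zero_mul]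
  simp only [Finset.sum_ite_eq, Finset.mem_univ, if_true, Equiv.Perm.mul_apply]
  congr

lemma permU_one {X : Type*} [DecidableEq X] : permU (1 : Equiv.Perm X) = 1 := by
  ext x y
  simp only [permU, Matrix.one_apply, Matrix.of_apply, Equiv.Perm.one_apply]
  congr

lemma permU_star {X : Type*} [Fintype X] [DecidableEq X] (σ : Equiv.Perm X) : star (permU σ) = permU σ⁻¹ := by
  ext x y
  simp only [permU, Matrix.star_apply, Matrix.of_apply]
  have : (σ y = x) ↔ (σ⁻¹ x = y) := by
    rw [Equiv.Perm.inv_eq_iff_eq]; exact eq_comm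
  simp only [this]
  split_ifs <;> simp

open scoped Matrix.Norms.L2Operator in
lemma norm_one_le' {X : Type*} [Fintype X] [DecidableEq X] : ‖(1 : Matrix X X ℂ)‖ ≤ 1 := by
  have := CStarRing.norm_star_mul_self (x := (1 : Matrix X X ℂ))
  simp only [star_one, mul_one] at this
  nlinarith [norm_nonneg (1 : Matrix X X ℂ)]

open scoped Matrix.Norms.L2Operator in
lemma norm_permU_le {X : Type*} [Fintype X] [DecidableEq X] (σ : Equiv.Perm X) :
    ‖permU σ‖ ≤ 1 := by
  have := CStarRing.norm_star_mul_self (x := permU σ)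
  rw [permU_star, permU_mul, mul_inv_cancel, permU_one] at this
  have h1 := norm_one_le' (X := X)
  have h2 : ‖permU σ‖ * ‖permU σ‖ ≤ 1 := by
    rw [← this]; exact h1
  nlinarith [norm_nonneg (permU σ)]

abbrev Quad (d : ℕ) := (Fin d × Fin d) × (Fin d × Fin d)

def s12 (d : ℕ) : Equiv.Perm (Quad d) :=
  ⟨fun x => ((x.1.2, x.1.1), x.2), fun x => ((x.1.2, x.1.1), x.2), fun _ => rfl, fun _ => rfl⟩
def s34 (d : ℕ) : Equiv.Perm (Quad d) :=
  ⟨fun x => (x.1, (x.2.2, x.2.1)), fun x => (x.1, (x.2.2, x.2.1)), fun _ => rfl, fun _ => rfl⟩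
def s13 (d : ℕ) : Equiv.Perm (Quad d) :=
  ⟨fun x => ((x.2.1, x.1.2), (x.1.1, x.2.2)), fun x => ((x.2.1, x.1.2), (x.1.1, x.2.2)),
    fun _ => rfl, fun _ => rfl⟩
def sEx (d : ℕ) : Equiv.Perm (Quad d) :=
  ⟨fun x => (x.2, x.1), fun x => (x.2, x.1), fun _ => rfl, fun _ => rfl⟩

def PP (d : ℕ) : Matrix (Quad d) (Quad d) ℂ :=
  (1 / 4 : ℂ) • ((1 - permU (s12 d)) * (1 - permU (s34 d)))

lemma s12_sq (d : ℕ) : permU (s12 d) * permU (s12 d) = 1 := by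
  rw [permU_mul, ← permU_one]; rfl
lemma s34_sq (d : ℕ) : permU (s34 d) * permU (s34 d) = 1 := by
  rw [permU_mul, ← permU_one]; rfl
lemma s13_sq (d : ℕ) : permU (s13 d) * permU (s13 d) = 1 := by
  rw [permU_mul, ← permU_one]; rfl
lemma s12_34 (d : ℕ) : permU (s12 d) * permU (s34 d) = permU (s34 d) * permU (s12 d) := by
  rw [permU_mul, permU_mul]; rfl

lemma PP_12 (d : ℕ) : PP d * permU (s12 d) = - PP d := by
  have h := s12_sq d
  have h2 := s12_34 d
  simp only [PP, Matrix.smul_mul]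
  rw [← smul_neg]
  congr 1
  have : (1 - permU (s34 d)) * permU (s12 d) = permU (s12 d) * (1 - permU (s34 d)) := by
    rw [sub_mul, mul_sub, h2]; simp
  rw [mul_assoc, this, ← mul_assoc, sub_mul, h]
  simp [sub_mul]
lemma PP_34 (d : ℕ) : PP d * permU (s34 d) = - PP d := by
  simp only [PP, Matrix.smul_mul]
  rw [← smul_neg]
  congr 1
  have : (1 - permU (s34 d)) * permU (s34 d) = - (1 - permU (s34 d)) := by
    rw [sub_mul, s34_sq]; simp
  rw [mul_assoc, this, mul_neg]
lemma r12_PP (d : ℕ) : permU (s12 d) * PP d = - PP d := by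
  simp only [PP, Matrix.mul_smul]
  rw [← smul_neg]
  congr 1
  have : permU (s12 d) * (1 - permU (s12 d)) = - (1 - permU (s12 d)) := by
    rw [mul_sub, s12_sq]; simp
  rw [← mul_assoc, this, neg_mul]
lemma r34_PP (d : ℕ) : permU (s34 d) * PP d = - PP d := by
  simp only [PP, Matrix.mul_smul]
  rw [← smul_neg]
  congr 1
  have h2 := s12_34 d
  have : permU (s34 d) * (1 - permU (s12 d)) = (1 - permU (s12 d)) * permU (s34 d) := by
    rw [sub_mul, mul_sub, h2]; simp
  rw [← mul_assoc, this, mul_assoc, mul_sub, s34_sq, ← mul_neg]; simp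

lemma PP_expand (d : ℕ) : PP d = (1 / 4 : ℂ) • (1 - permU (s12 d) - permU (s34 d)
    + permU (s12 d) * permU (s34 d)) := by
  simp only [PP]; congr 1; noncomm_ring

lemma PP_sq (d : ℕ) : PP d * PP d = PP d := by
  conv_lhs => rw [PP_expand d, ← PP_expand d]
  conv_lhs => enter [2]; rw [PP_expand d]
  rw [Matrix.mul_smul, mul_add, mul_sub, mul_sub, ← mul_assoc, PP_12, PP_34]
  rw [neg_mul, PP_34, mul_one]
  simp only [sub_neg_eq_add, neg_neg]
  module

lemma PP_ex (d : ℕ) : permU (sEx d) * PP d = PP d * permU (sEx d) := by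
  have h1 : permU (sEx d) * permU (s12 d) = permU (s34 d) * permU (sEx d) := by
    rw [permU_mul, permU_mul]; rfl
  have h2 : permU (sEx d) * permU (s34 d) = permU (s12 d) * permU (sEx d) := by
    rw [permU_mul, permU_mul]; rfl
  rw [PP_expand, Matrix.mul_smul, Matrix.smul_mul, mul_add, mul_sub, mul_sub, add_mul, sub_mul,
    sub_mul, h1, h2, ← mul_assoc, h1, mul_assoc, h2, ← mul_assoc, s12_34, mul_one, one_mul]
  congr 1; abel

lemma key_alg (d : ℕ) : PP d * permU (s13 d) * PP d * permU (s13 d) * PP d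
    = (1/4 : ℂ) • PP d - (1/2 : ℂ) • (PP d * permU (s13 d) * PP d)
      + (1/4 : ℂ) • (PP d * permU (sEx d)) := by
  have a1 : permU (s13 d) * permU (s12 d) * permU (s13 d)
      = permU (s12 d) * permU (s13 d) * permU (s12 d) := by
    simp only [permU_mul]; rfl
  have a2 : permU (s13 d) * permU (s34 d) * permU (s13 d)
      = permU (s34 d) * permU (s13 d) * permU (s34 d) := by
    simp only [permU_mul]; rfl
  have a3 : permU (s13 d) * (permU (s12 d) * permU (s34 d)) * permU (s13 d)
      = permU (s12 d) * permU (s34 d) * permU (sEx d) := by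
    simp only [permU_mul]; rfl
  have b : permU (s13 d) * PP d * permU (s13 d) = (1/4 : ℂ) • (1
      - permU (s12 d) * permU (s13 d) * permU (s12 d)
      - permU (s34 d) * permU (s13 d) * permU (s34 d)
      + permU (s12 d) * permU (s34 d) * permU (sEx d)) := by
    rw [← a1, ← a2, ← a3, PP_expand, Matrix.mul_smul, Matrix.smul_mul, mul_add, mul_sub, mul_sub,
      add_mul, sub_mul, sub_mul, mul_one, s13_sq]
  have e1 : PP d * (permU (s12 d) * permU (s13 d) * permU (s12 d)) * PP d
      = PP d * permU (s13 d) * PP d := by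
    simp only [← mul_assoc]
    rw [PP_12, mul_assoc _ _ (PP d), r12_PP]; simp
  have e2 : PP d * (permU (s34 d) * permU (s13 d) * permU (s34 d)) * PP d
      = PP d * permU (s13 d) * PP d := by
    simp only [← mul_assoc]
    rw [PP_34, mul_assoc _ _ (PP d), r34_PP]; simp
  have e3 : PP d * (permU (s12 d) * permU (s34 d) * permU (sEx d)) * PP d
      = PP d * permU (sEx d) := by
    simp only [← mul_assoc]
    rw [PP_12, neg_mul, PP_34, neg_neg, mul_assoc, PP_ex, ← mul_assoc, PP_sq]
  have : PP d * permU (s13 d) * PP d * permU (s13 d) * PP d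
      = PP d * (permU (s13 d) * PP d * permU (s13 d)) * PP d := by
    simp only [mul_assoc]
  rw [this, b, Matrix.mul_smul, Matrix.smul_mul, mul_add, mul_sub, mul_sub, add_mul, sub_mul,
    sub_mul, e1, e2, e3, mul_one, PP_sq]
  module

def LL (d : ℕ) : Matrix (Quad d) (Quad d) ℂ := permU (s13 d) + (1/4 : ℂ) • 1

def KK (d : ℕ) : Matrix (Quad d) (Quad d) ℂ := PP d * LL d * PP d

lemma PP_star (d : ℕ) : star (PP d) = PP d := by
  have h1 : star (permU (s12 d)) = permU (s12 d) := by rw [permU_star]; rfl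
  have h2 : star (permU (s34 d)) = permU (s34 d) := by rw [permU_star]; rfl
  rw [PP_expand, star_smul, star_add, star_sub, star_sub, star_mul, h1, h2, s12_34, star_one]
  simp

lemma KK_star (d : ℕ) : star (KK d) = KK d := by
  have h1 : star (permU (s13 d)) = permU (s13 d) := by rw [permU_star]; rfl
  have h2 : star (LL d) = LL d := by
    rw [LL, star_add, h1, star_smul, star_one]; simp
  rw [KK, star_mul, star_mul, PP_star, h2, mul_assoc]

lemma KK_sq (d : ℕ) : KK d * KK d = (5/16 : ℂ) • PP d + (1/4 : ℂ) • (PP d * permU (sEx d)) := by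
  have hK : KK d = PP d * permU (s13 d) * PP d + (1/4 : ℂ) • PP d := by
    rw [KK, LL, mul_add, add_mul, Matrix.mul_smul, Matrix.smul_mul, mul_one, PP_sq]
  have h1 : (PP d * permU (s13 d) * PP d) * (PP d * permU (s13 d) * PP d)
    = PP d * permU (s13 d) * PP d * permU (s13 d) * PP d := by
    rw [mul_assoc (PP d * permU (s13 d)) (PP d), ← mul_assoc (PP d) (PP d * permU (s13 d)),
      ← mul_assoc (PP d) (PP d), PP_sq]
    simp only [mul_assoc]
  have h2 : PP d * (PP d * permU (s13 d) * PP d) = PP d * permU (s13 d) * PP d := by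
    rw [← mul_assoc, ← mul_assoc, PP_sq]
  have h3 : (PP d * permU (s13 d) * PP d) * PP d = PP d * permU (s13 d) * PP d := by
    rw [mul_assoc, PP_sq]
  rw [hK, mul_add, add_mul, add_mul, h1, key_alg, Matrix.mul_smul, Matrix.mul_smul,
    Matrix.smul_mul, Matrix.smul_mul, h2, h3, PP_sq]
  module

open scoped Matrix.Norms.L2Operator in
lemma norm_PP (d : ℕ) : ‖PP d‖ ≤ 1 := by
  have h12 : ‖1 - permU (s12 d)‖ ≤ 2 :=
    (norm_sub_le _ _).trans (by linarith [norm_one_le' (X := Quad d), norm_permU_le (s12 d)])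
  have h34 : ‖1 - permU (s34 d)‖ ≤ 2 :=
    (norm_sub_le _ _).trans (by linarith [norm_one_le' (X := Quad d), norm_permU_le (s34 d)])
  have := norm_mul_le (1 - permU (s12 d)) (1 - permU (s34 d))
  rw [PP, norm_smul]
  norm_num
  nlinarith [norm_nonneg (1 - permU (s34 d)), norm_nonneg (1 - permU (s12 d))]

open scoped Matrix.Norms.L2Operator in
lemma norm_KK (d : ℕ) : ‖KK d‖ ≤ 3 / 4 := by
  have h := CStarRing.norm_star_mul_self (x := KK d)
  rw [KK_star, KK_sq] at h
  have h1 := norm_add_le ((5/16 : ℂ) • PP d) ((1/4 : ℂ) • (PP d * permU (sEx d)))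
  rw [norm_smul, norm_smul] at h1
  have h2 := norm_mul_le (PP d) (permU (sEx d))
  have h3 := norm_PP d
  have h4 := norm_permU_le (sEx d)
  have h5 : ‖PP d * permU (sEx d)‖ ≤ 1 := by
    nlinarith [norm_nonneg (PP d), norm_nonneg (permU (sEx d))]
  norm_num at h1
  nlinarith [norm_nonneg (KK d)]

open scoped Matrix.Norms.L2Operator in
lemma KK_bound (d : ℕ) (v : Quad d → ℂ) :
    ∑ x, Complex.normSq (((KK d).mulVec v) x) ≤ (9/16) * ∑ x, Complex.normSq (v x) := by
  have h := Matrix.l2_opNorm_mulVec (KK d) (WithLp.toLp 2 v)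
  have h2 : ‖KK d‖ * ‖WithLp.toLp 2 v‖ ≤ 3/4 * ‖WithLp.toLp 2 v‖ := by
    gcongr; exact norm_KK d
  have h3 := pow_le_pow_left₀ (norm_nonneg _) (h.trans h2) 2
  rw [mul_pow, EuclideanSpace.norm_sq_eq, EuclideanSpace.norm_sq_eq] at h3
  simp only [← Complex.normSq_eq_norm_sq] at h3
  norm_num at h3
  exact h3

def mm {d : ℕ} (a a' c c' : Fin d) : ℂ :=
  (if a = c' ∧ a' = c then 1 else 0) + (1/4) * (if a = c ∧ a' = c' then 1 else 0)

def QQ {d n : ℕ} (σ τ : Matrix (Fin n → Fin d) (Fin n → Fin d) ℂ) : ℂ :=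
  ∑ a, ∑ a', ∑ c, ∑ c', σ c a * τ c' a' * ∏ i, mm (a i) (a' i) (c i) (c' i)

def blk {d n : ℕ} (σ : Matrix (Fin (n+1) → Fin d) (Fin (n+1) → Fin d) ℂ) (x y : Fin d) :
    Matrix (Fin n → Fin d) (Fin n → Fin d) ℂ :=
  Matrix.of fun a b => σ (Fin.cons x a) (Fin.cons y b)

lemma QQ_succ {d n : ℕ} (σ τ : Matrix (Fin (n+1) → Fin d) (Fin (n+1) → Fin d) ℂ) :
    QQ σ τ = ∑ x, ∑ x', ∑ y, ∑ y', mm x x' y y' * QQ (blk σ y x) (blk τ y' x') := by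
  simp only [QQ, Finset.mul_sum]
  rw [sum_fin_succ]
  refine Finset.sum_congr rfl fun x _ => ?_
  have h1 : ∀ a : Fin n → Fin d, (∑ a' : Fin (n+1) → Fin d, ∑ c, ∑ c',
        σ c (Fin.cons x a : Fin (n+1) → Fin d) * τ c' a' *
          ∏ i, mm ((Fin.cons x a : Fin (n+1) → Fin d) i) (a' i) (c i) (c' i))
      = ∑ x', ∑ y, ∑ y', ∑ a', ∑ c, ∑ c', mm x x' y y' * (blk σ y x c a * blk τ y' x' c' a' *
          ∏ i, mm (a i) (a' i) (c i) (c' i)) := by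
    intro a
    rw [sum_fin_succ]
    refine Finset.sum_congr rfl fun x' _ => ?_
    have h2 : ∀ a' : Fin n → Fin d, (∑ c : Fin (n+1) → Fin d, ∑ c' : Fin (n+1) → Fin d,
        σ c (Fin.cons x a : Fin (n+1) → Fin d) * τ c' (Fin.cons x' a' : Fin (n+1) → Fin d) *
          ∏ i, mm ((Fin.cons x a : Fin (n+1) → Fin d) i) ((Fin.cons x' a' : Fin (n+1) → Fin d) i) (c i) (c' i))
      = ∑ y, ∑ y', ∑ c, ∑ c', mm x x' y y' * (blk σ y x c a * blk τ y' x' c' a' *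
          ∏ i, mm (a i) (a' i) (c i) (c' i)) := by
      intro a'
      rw [sum_fin_succ]
      refine Finset.sum_congr rfl fun y _ => ?_
      rw [Finset.sum_comm, ]
      rw [sum_fin_succ]
      refine Finset.sum_congr rfl fun y' _ => ?_
      rw [Finset.sum_comm]
      refine Finset.sum_congr rfl fun c _ => Finset.sum_congr rfl fun c' _ => ?_
      rw [Fin.prod_univ_succ]
      simp only [Fin.cons_zero, Fin.cons_succ, blk, Matrix.of_apply]
      ring
    simp only [h2]
    rw [Finset.sum_comm]
    refine Finset.sum_congr rfl fun y _ => ?_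
    rw [Finset.sum_comm]
  simp only [h1]
  rw [Finset.sum_comm]
  refine Finset.sum_congr rfl fun x' _ => ?_
  rw [Finset.sum_comm]
  refine Finset.sum_congr rfl fun y _ => ?_
  rw [Finset.sum_comm]

lemma QQ_add_left {d n : ℕ} (σ σ' τ : Matrix (Fin n → Fin d) (Fin n → Fin d) ℂ) :
    QQ (σ + σ') τ = QQ σ τ + QQ σ' τ := by
  simp only [QQ, Matrix.add_apply, add_mul, Finset.sum_add_distrib]

lemma QQ_add_right {d n : ℕ} (σ τ τ' : Matrix (Fin n → Fin d) (Fin n → Fin d) ℂ) :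
    QQ σ (τ + τ') = QQ σ τ + QQ σ τ' := by
  simp only [QQ, Matrix.add_apply, mul_add, add_mul, Finset.sum_add_distrib]

lemma QQ_sum_left {d n : ℕ} {ι : Type*} (s : Finset ι)
    (f : ι → Matrix (Fin n → Fin d) (Fin n → Fin d) ℂ) (τ) :
    QQ (∑ i ∈ s, f i) τ = ∑ i ∈ s, QQ (f i) τ :=
  map_sum (AddMonoidHom.mk' (fun σ => QQ σ τ) (fun a b => QQ_add_left a b τ)) f s

lemma QQ_sum_right {d n : ℕ} {ι : Type*} (s : Finset ι)
    (f : ι → Matrix (Fin n → Fin d) (Fin n → Fin d) ℂ) (τ) :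
    QQ τ (∑ i ∈ s, f i) = ∑ i ∈ s, QQ τ (f i) :=
  map_sum (AddMonoidHom.mk' (fun σ => QQ τ σ) (fun a b => QQ_add_right τ a b)) f s

lemma QQ_succ' {d n : ℕ} (σ τ : Matrix (Fin (n+1) → Fin d) (Fin (n+1) → Fin d) ℂ) :
    QQ σ τ = ∑ x, ∑ x', QQ (blk σ x' x) (blk τ x x')
      + (1/4) * QQ (∑ x, blk σ x x) (∑ x, blk τ x x) := by
  rw [QQ_succ, QQ_sum_left]
  simp only [QQ_sum_right, Finset.mul_sum]
  rw [← Finset.sum_add_distrib]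
  refine Finset.sum_congr rfl fun x _ => ?_
  rw [← Finset.sum_add_distrib]
  refine Finset.sum_congr rfl fun x' _ => ?_
  simp only [mm, add_mul, Finset.sum_add_distrib, ite_and, ite_mul, mul_ite, mul_zero,
    zero_mul, one_mul, mul_one]
  congr 1
  · rw [Finset.sum_comm]; simp
  · simp

lemma QQ_lower {d : ℕ} (n : ℕ) : ∀ σ : Matrix (Fin n → Fin d) (Fin n → Fin d) ℂ,
    ∑ a, ∑ b, Complex.normSq (σ a b) ≤ (QQ σ σ.conjTranspose).re := by
  induction n with
  | zero =>
    intro σ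
    simp [QQ, Matrix.conjTranspose_apply, Complex.normSq_apply]
  | succ n ih =>
    intro σ
    have hb : ∀ x y, blk σ.conjTranspose x y = (blk σ y x).conjTranspose := by
      intro x y; ext a b; simp [blk, Matrix.conjTranspose_apply]
    have hs : ∑ x, blk σ.conjTranspose x x = (∑ x, blk σ x x).conjTranspose := by
      rw [Matrix.conjTranspose_sum]; simp only [hb]
    rw [QQ_succ', hs]
    simp only [hb]
    have h0 : 0 ≤ (QQ (∑ x, blk σ x x) (∑ x, blk σ x x).conjTranspose).re :=
      le_trans (Finset.sum_nonneg fun _ _ => Finset.sum_nonneg fun _ _ => Complex.normSq_nonneg _)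
        (ih _)
    have e : ((1/4 : ℂ) * QQ (∑ x, blk σ x x) (∑ x, blk σ x x).conjTranspose).re
      = 1/4 * (QQ (∑ x, blk σ x x) (∑ x, blk σ x x).conjTranspose).re := by
      simp [Complex.mul_re]
    rw [Complex.add_re, e, Complex.re_sum]
    simp only [Complex.re_sum]
    have : ∑ a, ∑ b, Complex.normSq (σ a b) = ∑ x, ∑ x', ∑ a, ∑ b,
        Complex.normSq (blk σ x' x a b) := by
      rw [sum_fin_succ]
      simp only [sum_fin_succ (X := Fin d) n, blk, Matrix.of_apply]
      conv_rhs => rw [Finset.sum_comm]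
      refine Finset.sum_congr rfl fun x _ => ?_
      rw [Finset.sum_comm]
    rw [this]
    have := Finset.sum_le_sum fun x (_ : x ∈ Finset.univ) => Finset.sum_le_sum
      fun x' (_ : x' ∈ (Finset.univ : Finset (Fin d))) => ih (blk σ x' x)
    linarith

lemma asymProj_eq (d : ℕ) (x y : Quad d) :
    PP d x y = asymProj d x.1 y.1 * asymProj d x.2 y.2 := by
  obtain ⟨⟨a, b⟩, a', b'⟩ := x
  obtain ⟨⟨e, f⟩, e', f'⟩ := y
  rw [PP_expand, permU_mul]
  simp only [asymProj, permU, s12, s34, Matrix.smul_apply, Matrix.add_apply, Matrix.sub_apply,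
    Matrix.of_apply, Matrix.one_apply, Equiv.Perm.mul_apply, Equiv.coe_fn_mk, Prod.mk.injEq,
    smul_eq_mul]
  have key : ∀ p q r s : Prop, (1/4 : ℂ) * ((if p ∧ r then 1 else 0) - (if q ∧ r then 1 else 0)
      - (if p ∧ s then 1 else 0) + (if q ∧ s then 1 else 0))
      = 1/2 * ((if p then 1 else 0) - (if q then 1 else 0))
        * (1/2 * ((if r then 1 else 0) - (if s then 1 else 0))) := by
    intro p q r s
    by_cases hp : p <;> by_cases hq : q <;> by_cases hr : r <;> by_cases hs : s <;>
      simp [hp, hq, hr, hs] <;> norm_num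
  have := key (a = e ∧ b = f) (a = f ∧ b = e) (a' = e' ∧ b' = f') (a' = f' ∧ b' = e')
  simp only [and_comm (a := b = e), and_comm (a := b' = e')]
  convert this

lemma asymProj_permU (d : ℕ) : asymProj d = (1/2 : ℂ) • (1 - permU (Equiv.prodComm _ _)) := by
  ext ⟨a, b⟩ ⟨e, f⟩
  simp only [asymProj, permU, Matrix.smul_apply, Matrix.sub_apply, Matrix.of_apply,
    Matrix.one_apply, Equiv.prodComm_apply, Prod.swap_prod_mk, Prod.mk.injEq, smul_eq_mul,
    and_comm (a := b = e)]

lemma asymProj_sq (d : ℕ) : asymProj d * asymProj d = asymProj d := by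
  have h : permU (Equiv.prodComm (Fin d) (Fin d)) * permU (Equiv.prodComm (Fin d) (Fin d)) = 1 := by
    rw [permU_mul, ← permU_one]; rfl
  rw [asymProj_permU, Matrix.smul_mul, Matrix.mul_smul, sub_mul, mul_sub, mul_sub, h]
  simp only [mul_one, one_mul]
  module

lemma asymProj_herm (d : ℕ) : (asymProj d).conjTranspose = asymProj d := by
  ext x y
  obtain ⟨a, b⟩ := x
  obtain ⟨e, f⟩ := y
  simp only [asymProj, Matrix.conjTranspose_apply, Matrix.of_apply]
  simp only [eq_comm (a := e), eq_comm (a := f), and_comm (a := b = e)]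
  split_ifs <;> simp

/-- the doubled vector -/
def dbl {d n : ℕ} (φ : (Fin n → Fin d × Fin d) → ℂ) : (Fin n → Quad d) → ℂ :=
  fun z => φ (fun i => (z i).1) * φ (fun i => (z i).2)

lemma sum_pi_prod {n : ℕ} {X Y R : Type*} [Fintype X] [Fintype Y] [AddCommMonoid R]
    (f : (Fin n → X × Y) → R) :
    ∑ z, f z = ∑ x : Fin n → X, ∑ y : Fin n → Y, f (fun i => (x i, y i)) := by
  rw [← Fintype.sum_prod_type']
  exact ((Equiv.arrowProdEquivProdArrow (Fin n) (fun _ => X) (fun _ => Y)).symm.sum_comp f).symm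

lemma dbl_fix {d n : ℕ} (φ : (Fin n → Fin d × Fin d) → ℂ)
    (h : (tpow n (asymProj d)).mulVec φ = φ) :
    (tpow n (PP d)).mulVec (dbl φ) = dbl φ := by
  ext z
  have h1 := congrFun h (fun i => (z i).1)
  have h2 := congrFun h (fun i => (z i).2)
  simp only [Matrix.mulVec, dotProduct, tpow, Matrix.of_apply] at h1 h2 ⊢
  rw [sum_pi_prod]
  conv_rhs => rw [dbl, ← h1, ← h2, Finset.sum_mul_sum]
  refine Finset.sum_congr rfl fun x _ => Finset.sum_congr rfl fun y _ => ?_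
  simp only [asymProj_eq, Finset.prod_mul_distrib, dbl]
  ring

lemma cs_bound {Z : Type*} [Fintype Z] (u v : Z → ℂ) (c : ℝ) (hc : 0 ≤ c)
    (h : ∑ x, Complex.normSq (v x) ≤ c ^ 2 * ∑ x, Complex.normSq (u x)) :
    (dotProduct (star u) v).re ≤ c * ∑ x, Complex.normSq (u x) := by
  have h1 : (dotProduct (star u) v).re ≤ ‖WithLp.toLp 2 u‖ * ‖WithLp.toLp 2 v‖ := by
    have := re_inner_le_norm (𝕜 := ℂ) (WithLp.toLp 2 u) (WithLp.toLp 2 v)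
    rw [EuclideanSpace.inner_eq_star_dotProduct, dotProduct_comm] at this
    simpa using this
  have hu : ‖WithLp.toLp 2 u‖ ^ 2 = ∑ x, Complex.normSq (u x) := by
    rw [EuclideanSpace.norm_sq_eq]; simp [Complex.normSq_eq_norm_sq]
  have hv : ‖WithLp.toLp 2 v‖ ^ 2 = ∑ x, Complex.normSq (v x) := by
    rw [EuclideanSpace.norm_sq_eq]; simp [Complex.normSq_eq_norm_sq]
  rw [← hu, ← hv, ← mul_pow] at h
  have h2 := le_of_sq_le_sq h (by positivity)
  rw [← hu]
  nlinarith [norm_nonneg (WithLp.toLp 2 u)]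

lemma upper {d n : ℕ} (φ : (Fin n → Fin d × Fin d) → ℂ)
    (h : (tpow n (asymProj d)).mulVec φ = φ) (hφ : ∑ x, Complex.normSq (φ x) = 1) :
    (dotProduct (star (dbl φ)) ((tpow n (LL d)).mulVec (dbl φ))).re ≤ (3/4 : ℝ) ^ n := by
  have h1 := dbl_fix φ h
  have hN : ∑ z, Complex.normSq (dbl φ z) = 1 := by
    rw [sum_pi_prod]
    simp only [dbl, Complex.normSq_mul, ← Finset.mul_sum, hφ, mul_one]
  have h2 : dotProduct (star (dbl φ)) ((tpow n (LL d)).mulVec (dbl φ))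
      = dotProduct (star (dbl φ)) ((tpow n (KK d)).mulVec (dbl φ)) := by
    have hs : (tpow n (PP d)).conjTranspose = tpow n (PP d) := by
      rw [← tpow_conjTranspose, ← Matrix.star_eq_conjTranspose, PP_star]
    rw [KK, tpow_mul, tpow_mul, ← Matrix.mulVec_mulVec, h1, ← Matrix.mulVec_mulVec,
      Matrix.dotProduct_mulVec (star (dbl φ)) (tpow n (PP d)), ← hs, ← Matrix.star_mulVec, h1]
  rw [h2]
  have h3 := tpow_bound (9/16) (by norm_num) (KK d) (KK_bound d) n (dbl φ)
  have := cs_bound (dbl φ) ((tpow n (KK d)).mulVec (dbl φ)) ((3/4)^n) (by positivity)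
    (by
      have e : (((3:ℝ)/4)^n)^2 = (9/16)^n := by
        rw [← pow_mul, mul_comm n 2, pow_mul]; norm_num
      rw [e]; exact h3)
  rwa [hN, mul_one] at this

lemma LL_entry (d : ℕ) (a b a' b' c e c' e' : Fin d) :
    LL d ((a, b), (a', b')) ((c, e), (c', e')) =
      mm a a' c c' * ((if b = e then 1 else 0) * (if b' = e' then 1 else 0)) := by
  simp only [LL, permU, s13, mm, Matrix.add_apply, Matrix.of_apply, Matrix.smul_apply,
    Matrix.one_apply, Equiv.coe_fn_mk, Prod.mk.injEq, smul_eq_mul]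
  by_cases h1 : b = e <;> by_cases h2 : b' = e' <;> simp [h1, h2, and_comm]

lemma prod_ind {n : ℕ} {X : Type*} [DecidableEq X] (b e : Fin n → X) :
    ∏ i, (if b i = e i then (1:ℂ) else 0) = if b = e then 1 else 0 := by
  split_ifs with h
  · subst h; simp
  · obtain ⟨i, hi⟩ := Function.ne_iff.mp h
    exact Finset.prod_eq_zero (Finset.mem_univ i) (by simp [hi])

lemma sum_swap4 {Z : Type*} [Fintype Z] (f : Z → Z → Z → Z → ℂ) :
    ∑ b, ∑ b', ∑ c, ∑ c', f b b' c c' = ∑ c, ∑ c', ∑ b, ∑ b', f b b' c c' := by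
  have h : ∀ b, ∑ b', ∑ c, ∑ c', f b b' c c' = ∑ c, ∑ c', ∑ b', f b b' c c' := by
    intro b
    rw [Finset.sum_comm]
    exact Finset.sum_congr rfl fun c _ => Finset.sum_comm
  simp only [h]
  rw [Finset.sum_comm]
  exact Finset.sum_congr rfl fun c _ => Finset.sum_comm

lemma link {d n : ℕ} (ψ : (Fin n → Fin d) × (Fin n → Fin d) → ℂ)
    (φ : (Fin n → Fin d × Fin d) → ℂ) (hφ : ∀ a b, φ (fun i => (a i, b i)) = ψ (a, b))
    (ρ : Matrix (Fin n → Fin d) (Fin n → Fin d) ℂ)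
    (hρ : ∀ a c, ρ a c = ∑ b, ψ (a, b) * star (ψ (c, b))) :
    dotProduct (star (dbl φ)) ((tpow n (LL d)).mulVec (dbl φ)) = QQ ρ ρ := by
  simp only [dotProduct, Matrix.mulVec, tpow, Matrix.of_apply]
  simp only [sum_pi_prod, dbl, Pi.star_apply, hφ, LL_entry, Finset.prod_mul_distrib, prod_ind]
  simp only [QQ, hρ]
  have h1 : ∀ a b a' b' : Fin n → Fin d,
      (∑ c : Fin n → Fin d, ∑ e : Fin n → Fin d, ∑ c' : Fin n → Fin d, ∑ e' : Fin n → Fin d,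
        (∏ i, mm (a i) (a' i) (c i) (c' i)) * ((if b = e then 1 else 0) *
          (if b' = e' then 1 else 0)) * (ψ (c, e) * ψ (c', e')))
      = ∑ c : Fin n → Fin d, ∑ c' : Fin n → Fin d,
        (∏ i, mm (a i) (a' i) (c i) (c' i)) * (ψ (c, b) * ψ (c', b')) := by
    intro a b a' b'
    refine Finset.sum_congr rfl fun c _ => ?_
    rw [Finset.sum_comm]
    refine Finset.sum_congr rfl fun c' _ => ?_
    simp
  simp only [h1]
  refine Finset.sum_congr rfl fun a _ => ?_
  rw [Finset.sum_comm]
  refine Finset.sum_congr rfl fun a' _ => ?_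
  simp only [Finset.mul_sum]
  rw [sum_swap4]
  refine Finset.sum_congr rfl fun c _ => Finset.sum_congr rfl fun c' _ => ?_
  conv_rhs => rw [← Finset.mul_sum, Finset.sum_mul_sum, Finset.sum_mul]
  refine Finset.sum_congr rfl fun b _ => ?_
  rw [Finset.sum_mul]
  refine Finset.sum_congr rfl fun b' _ => ?_
  rw [star_mul]
  ring

lemma entropy_ge {ι : Type*} [Fintype ι] [DecidableEq ι] (ρ : Matrix ι ι ℂ) (hρ : ρ.PosSemidef)
    (htr : ρ.trace = 1) (B : ℝ) (hB : 0 < B) (hle : ∑ a, ∑ b, Complex.normSq (ρ a b) ≤ B) :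
    - Real.logb 2 B ≤ vnEntropy ρ := by
  have hH := hρ.1
  rw [vnEntropy, dif_pos hH]
  have hnn : ∀ i, 0 ≤ hH.eigenvalues i := fun i => hρ.eigenvalues_nonneg i
  have hsum : ∑ i, hH.eigenvalues i = 1 := by
    have := hH.trace_eq_sum_eigenvalues
    rw [htr] at this
    have h2 : ((∑ i, hH.eigenvalues i : ℝ) : ℂ) = 1 := by rw [this]; push_cast; rfl
    exact_mod_cast h2
  have hsq : ∑ i, hH.eigenvalues i ^ 2 = ∑ a, ∑ b, Complex.normSq (ρ a b) := by
    have h1 : (ρ * ρ).trace = ((∑ a, ∑ b, Complex.normSq (ρ a b) : ℝ) : ℂ) := by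
      rw [Matrix.trace]
      push_cast
      refine Finset.sum_congr rfl fun a _ => ?_
      rw [Matrix.diag_apply, Matrix.mul_apply]
      refine Finset.sum_congr rfl fun b _ => ?_
      rw [← hH.apply b a, Complex.normSq_eq_conj_mul_self, mul_comm]; rfl
    have h2 : (ρ * ρ).trace = ((∑ i, hH.eigenvalues i ^ 2 : ℝ) : ℂ) := by
      conv_lhs => rw [hH.spectral_theorem, ← map_mul, Unitary.conjStarAlgAut_apply,
        Matrix.trace_mul_cycle, Unitary.coe_star_mul_self, one_mul,
        Matrix.diagonal_mul_diagonal, Matrix.trace_diagonal]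
      push_cast
      refine Finset.sum_congr rfl fun i _ => ?_
      simp [sq]
    exact_mod_cast h2.symm.trans h1
  have key : ∀ i, hH.eigenvalues i * Real.logb 2 (hH.eigenvalues i) ≤
      hH.eigenvalues i * Real.logb 2 B +
        (hH.eigenvalues i ^ 2 / B - hH.eigenvalues i) / Real.log 2 := by
    intro i
    have l2 : 0 < Real.log 2 := Real.log_pos (by norm_num)
    rcases (hnn i).eq_or_lt with h | h
    · rw [← h]; simp
    · have := Real.log_le_sub_one_of_pos (div_pos h hB)
      rw [Real.log_div h.ne' hB.ne'] at this
      have h3 : hH.eigenvalues i * Real.log (hH.eigenvalues i) ≤ hH.eigenvalues i * Real.log B +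
          (hH.eigenvalues i ^ 2 / B - hH.eigenvalues i) := by
        have := mul_le_mul_of_nonneg_left this h.le
        have e : hH.eigenvalues i ^ 2 / B = hH.eigenvalues i * (hH.eigenvalues i / B) := by ring
        rw [e]; linarith
      simp only [Real.logb]
      have := div_le_div_of_nonneg_right h3 l2.le
      calc _ = hH.eigenvalues i * Real.log (hH.eigenvalues i) / Real.log 2 := by ring
        _ ≤ _ := this
        _ = _ := by ring
  have h := Finset.sum_le_sum fun i (_ : i ∈ Finset.univ) => key i
  rw [Finset.sum_add_distrib, ← Finset.sum_mul, ← Finset.sum_div, Finset.sum_sub_distrib,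
    ← Finset.sum_div, hsum, hsq] at h
  have l2 : 0 < Real.log 2 := Real.log_pos (by norm_num)
  have h4 : ((∑ a, ∑ b, Complex.normSq (ρ a b)) / B - 1) / Real.log 2 ≤ 0 := by
    apply div_nonpos_of_nonpos_of_nonneg _ l2.le
    rw [sub_nonpos, div_le_one hB]; exact hle
  linarith

lemma ptrace_pure_psd {α β : Type*} [Fintype α] [Fintype β] (ψ : α × β → ℂ) :
    (ptraceSnd (Matrix.vecMulVec ψ (star ψ))).PosSemidef := by
  have : ptraceSnd (Matrix.vecMulVec ψ (star ψ)) =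
      (Matrix.of fun a b => ψ (a, b)) * (Matrix.of fun a b => ψ (a, b)).conjTranspose := by
    ext a c
    simp [ptraceSnd, Matrix.mul_apply, Matrix.vecMulVec_apply]
  rw [this]
  exact Matrix.posSemidef_self_mul_conjTranspose _

lemma ptrace_pure_trace {α β : Type*} [Fintype α] [Fintype β] (ψ : α × β → ℂ)
    (h : ∑ x, Complex.normSq (ψ x) = 1) :
    (ptraceSnd (Matrix.vecMulVec ψ (star ψ))).trace = 1 := by
  have h' : ((∑ x, Complex.normSq (ψ x) : ℝ) : ℂ) = 1 := by rw [h]; simp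
  rw [← h', Fintype.sum_prod_type]
  push_cast
  simp [Matrix.trace, ptraceSnd, Matrix.vecMulVec_apply, Complex.mul_conj]

lemma pure_bound {d n : ℕ} (ψ : (Fin n → Fin d) × (Fin n → Fin d) → ℂ)
    (h1 : ∑ x, Complex.normSq (ψ x) = 1)
    (h : (tpow n (asymProj d)).mulVec (fun z => ψ (fun i => (z i).1, fun i => (z i).2))
      = (fun z => ψ (fun i => (z i).1, fun i => (z i).2))) :
    (n : ℝ) * Real.logb 2 (4/3) ≤ vnEntropy (ptraceSnd (Matrix.vecMulVec ψ (star ψ))) := by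
  have hpsd := ptrace_pure_psd ψ
  have hu := upper _ h (by rw [sum_pi_prod]; rw [← h1, Fintype.sum_prod_type])
  rw [link ψ _ (fun a b => rfl) (ptraceSnd (Matrix.vecMulVec ψ (star ψ)))
    (fun a c => by simp [ptraceSnd, Matrix.vecMulVec_apply])] at hu
  have hl := QQ_lower n (ptraceSnd (Matrix.vecMulVec ψ (star ψ)))
  rw [hpsd.1.eq] at hl
  have := entropy_ge _ hpsd (ptrace_pure_trace ψ h1) ((3/4)^n) (by positivity) (hl.trans hu)
  refine le_trans (le_of_eq ?_) this
  rw [Real.logb_pow, show (4/3 : ℝ) = (3/4)⁻¹ by norm_num, Real.logb_inv]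
  ring

lemma in_range {Z : Type*} [Fintype Z] [DecidableEq Z] {k : ℕ} (p : Fin k → ℝ) (hp : ∀ i, 0 ≤ p i)
    (φ : Fin k → Z → ℂ) (Q : Matrix Z Z ℂ) (c : ℂ) (hQ : Q * Q = Q)
    (h : ∑ i, p i • Matrix.vecMulVec (φ i) (star (φ i)) = c • Q) (i : Fin k) (hi : p i ≠ 0) :
    Q.mulVec (φ i) = φ i := by
  have h0 : (1 - Q) * (∑ i, p i • Matrix.vecMulVec (φ i) (star (φ i))) * (1 - Q).conjTranspose
      = 0 := by
    rw [h, Matrix.mul_smul, sub_mul, one_mul, hQ]; simp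
  have h1 : ∑ i, p i • Matrix.vecMulVec ((1 - Q).mulVec (φ i)) (star ((1 - Q).mulVec (φ i)))
      = 0 := by
    rw [← h0, Finset.mul_sum, Finset.sum_mul]
    refine Finset.sum_congr rfl fun j _ => ?_
    rw [Matrix.mul_smul, Matrix.smul_mul, Matrix.mul_vecMulVec, Matrix.vecMulVec_mul,
      Matrix.star_mulVec]
  have h2 : ∀ x, (1 - Q).mulVec (φ i) x = 0 := by
    intro x
    have h3 := congrFun (congrFun h1 x) x
    rw [Matrix.sum_apply] at h3
    have h4 : ∑ j, p j * Complex.normSq ((1 - Q).mulVec (φ j) x) = 0 := by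
      have : ((∑ j, p j * Complex.normSq ((1 - Q).mulVec (φ j) x) : ℝ) : ℂ) = 0 := by
        push_cast
        rw [← Matrix.zero_apply (α := ℂ) x x, ← h3]
        refine Finset.sum_congr rfl fun j _ => ?_
        rw [Matrix.smul_apply, Matrix.vecMulVec_apply, Pi.star_apply, ← Complex.mul_conj]
        simp
      exact_mod_cast this
    have h5 := (Finset.sum_eq_zero_iff_of_nonneg
      (fun j _ => mul_nonneg (hp j) (Complex.normSq_nonneg _))).mp h4 i (Finset.mem_univ i)
    rcases mul_eq_zero.mp h5 with h6 | h6
    · exact absurd h6 hi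
    · exact Complex.normSq_eq_zero.mp h6
  have h3 : (1 - Q).mulVec (φ i) = 0 := funext h2
  rw [Matrix.sub_mulVec, Matrix.one_mulVec, sub_eq_zero] at h3
  exact h3.symm

lemma ensemble_bound {d n k : ℕ} (p : Fin k → ℝ)
    (ψ : Fin k → ((Fin n → Fin d) × (Fin n → Fin d) → ℂ)) (hp : ∀ i, 0 ≤ p i)
    (hs : ∑ i, p i = 1) (h1 : ∀ i, ∑ x, Complex.normSq (ψ i x) = 1)
    (h : ∑ i, p i • Matrix.vecMulVec (ψ i) (star (ψ i)) = alphaPow d n) :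
    (n : ℝ) * Real.logb 2 (4/3) ≤
      ∑ i, p i * vnEntropy (ptraceSnd (Matrix.vecMulVec (ψ i) (star (ψ i)))) := by
  have hb : ∀ i, p i * ((n : ℝ) * Real.logb 2 (4/3)) ≤
      p i * vnEntropy (ptraceSnd (Matrix.vecMulVec (ψ i) (star (ψ i)))) := by
    intro i
    by_cases hi : p i = 0
    · rw [hi]; simp
    · refine mul_le_mul_of_nonneg_left (pure_bound (ψ i) (h1 i) ?_) (hp i)
      refine in_range p hp (fun i z => ψ i (fun i => (z i).1, fun i => (z i).2))
        (tpow n (asymProj d)) ((1 / (Nat.choose d 2 : ℂ))^n) (by rw [← tpow_mul, asymProj_sq])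
        ?_ i hi
      ext z w
      have := congrFun (congrFun h (fun i => (z i).1, fun i => (z i).2))
        (fun i => (w i).1, fun i => (w i).2)
      rw [Matrix.sum_apply] at this ⊢
      simp only [Matrix.smul_apply, Matrix.vecMulVec_apply, Pi.star_apply] at this ⊢
      rw [this]
      simp [alphaPow, antisymState, tpow, Finset.prod_mul_distrib]
  have := Finset.sum_le_sum fun i (_ : i ∈ Finset.univ) => hb i
  rwa [← Finset.sum_mul, hs, one_mul] at this

def dl {d : ℕ} (x : Fin d × Fin d) (j : Fin d × Fin d) : ℂ :=
  (if x = j then 1 else 0) - (if x = j.swap then 1 else 0)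

def uu {d : ℕ} (j : Fin d × Fin d) (x : Fin d × Fin d) : ℂ :=
  if j.1 = j.2 then (if x = j then 1 else 0) else ((Real.sqrt 2)⁻¹ : ℝ) * dl x j

def qq {d : ℕ} (j : Fin d × Fin d) : ℝ :=
  if j.1 = j.2 then 0 else 1 / ((d : ℝ) * (d - 1))

lemma qq_nonneg {d : ℕ} (hd : 2 ≤ d) (j : Fin d × Fin d) : 0 ≤ qq j := by
  have : (2 : ℝ) ≤ d := by exact_mod_cast hd
  unfold qq
  split_ifs
  · exact le_rfl
  · have : (0:ℝ) < d - 1 := by linarith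
    positivity

lemma qq_sum {d : ℕ} (hd : 2 ≤ d) : ∑ j : Fin d × Fin d, qq j = 1 := by
  have h2 : (2 : ℝ) ≤ d := by exact_mod_cast hd
  have h3 : (d : ℝ) - 1 ≠ 0 := by linarith
  have h4 : (d : ℝ) ≠ 0 := by linarith
  have : ∀ j : Fin d × Fin d, qq j = 1 / ((d : ℝ) * (d - 1))
      - (if j.1 = j.2 then 1 / ((d : ℝ) * (d - 1)) else 0) := by
    intro j; unfold qq; split_ifs <;> simp
  simp only [this, Finset.sum_sub_distrib, Fintype.sum_prod_type, Finset.sum_ite_eq,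
    Finset.mem_univ, if_true, Finset.sum_const, Finset.card_univ, Fintype.card_fin, nsmul_eq_mul]
  rw [Fintype.card_prod, Fintype.card_fin]
  push_cast
  field_simp

lemma uu_norm {d : ℕ} (j : Fin d × Fin d) : ∑ x, Complex.normSq (uu j x) = 1 := by
  by_cases h : j.1 = j.2
  · have : ∀ x, Complex.normSq (uu j x) = if x = j then 1 else 0 := by
      intro x; simp only [uu, if_pos h]; split_ifs <;> simp
    simp only [this, Finset.sum_ite_eq', Finset.mem_univ, if_true]
  · have hne : j ≠ j.swap := by
      intro h'; exact h (congrArg Prod.fst h')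
    have : ∀ x, Complex.normSq (uu j x) = (1/2) * ((if x = j then 1 else 0)
        + (if x = j.swap then 1 else 0)) := by
      intro x
      simp only [uu, if_neg h, Complex.normSq_mul, Complex.normSq_ofReal, dl]
      have e : (Real.sqrt 2)⁻¹ * (Real.sqrt 2)⁻¹ = 1/2 := by
        rw [← mul_inv, Real.mul_self_sqrt (by norm_num)]; norm_num
      rw [e]
      congr 1
      by_cases h1 : x = j
      · have h2 : x ≠ j.swap := by rw [h1]; exact hne
        rw [if_pos h1, if_neg h2, if_pos h1, if_neg h2]; simp
      · rw [if_neg h1, if_neg h1]; split_ifs <;> simp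
    simp only [this, ← Finset.mul_sum, Finset.sum_add_distrib, Finset.sum_ite_eq',
      Finset.mem_univ, if_true]
    norm_num

lemma uu_sum {d : ℕ} (hd : 2 ≤ d) (x y : Fin d × Fin d) :
    ∑ j, (qq j : ℂ) * (uu j x * star (uu j y)) = antisymState d x y := by
  have h2 : (2 : ℝ) ≤ d := by exact_mod_cast hd
  have h3 : (d : ℂ) - 1 ≠ 0 := by
    have : (d : ℝ) - 1 ≠ 0 := by linarith
    exact_mod_cast this
  have h4 : (d : ℂ) ≠ 0 := by
    have : (d : ℝ) ≠ 0 := by linarith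
    exact_mod_cast this
  have hj : ∀ j : Fin d × Fin d, (qq j : ℂ) * (uu j x * star (uu j y)) =
      (1 / ((d : ℂ) * (d - 1)) * (1/2)) * (dl x j * dl y j) := by
    intro j
    by_cases h : j.1 = j.2
    · have : j.swap = j := Prod.ext h.symm h
      simp [qq, dl, h, this]
    · have hs : star (dl y j) = dl y j := by
        unfold dl; split_ifs <;> simp
      have e : (((Real.sqrt 2)⁻¹ : ℝ) : ℂ) * (((Real.sqrt 2)⁻¹ : ℝ) : ℂ) = 1/2 := by
        rw [← Complex.ofReal_mul, ← mul_inv, Real.mul_self_sqrt (by norm_num)]; norm_num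
      simp only [qq, uu, if_neg h, star_mul, hs]
      have e2 : star (((Real.sqrt 2)⁻¹ : ℝ) : ℂ) = (((Real.sqrt 2)⁻¹ : ℝ) : ℂ) :=
        Complex.conj_ofReal _
      rw [e2, ← e]
      push_cast
      ring
  have hdd : ∑ j, dl x j * dl y j = 2 * ((if x = y then 1 else 0) - (if x = y.swap then 1 else 0)) := by
    have hsw : ∀ (a b : Fin d × Fin d), (a = b.swap) ↔ (a.swap = b) := by
      intro a b
      constructor
      · rintro rfl; simp
      · rintro rfl; simp
    have hsw2 : (x.swap = y.swap) ↔ x = y := Prod.swap_injective.eq_iff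
    have e : ∀ j, dl x j * dl y j = (if x = j then (if y = j then 1 else 0) else 0)
        - (if x = j then (if y.swap = j then 1 else 0) else 0)
        - (if x.swap = j then (if y = j then 1 else 0) else 0)
        + (if x.swap = j then (if y.swap = j then 1 else 0) else 0) := by
      intro j
      simp only [dl, hsw]
      split_ifs <;> simp
    simp only [e, Finset.sum_add_distrib, Finset.sum_sub_distrib, Finset.sum_ite_eq,
      Finset.mem_univ, if_true, eq_comm (a := y), eq_comm (a := y.swap), hsw2]
    simp only [hsw]
    ring
  simp only [hj, ← Finset.mul_sum, hdd]
  have hch : (Nat.choose d 2 : ℂ) = (d : ℂ) * (d - 1) / 2 := Nat.cast_choose_two ℂ d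
  simp only [antisymState, asymProj, Matrix.smul_apply, Matrix.of_apply, smul_eq_mul, hch]
  have p1 : (x = y) = (x.1 = y.1 ∧ x.2 = y.2) := propext Prod.ext_iff
  have p2 : (x = y.swap) = (x.1 = y.2 ∧ x.2 = y.1) := propext Prod.ext_iff
  simp only [p1, p2]
  field_simp
  
lemma ens_nonempty {d n : ℕ} (hd : 2 ≤ d) :
    ∃ (k : ℕ) (p : Fin k → ℝ) (ψ : Fin k → ((Fin n → Fin d) × (Fin n → Fin d) → ℂ)),
    (∀ i, 0 ≤ p i) ∧ (∑ i, p i = 1) ∧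
    (∀ i, ∑ x, Complex.normSq (ψ i x) = 1) ∧
    (∑ i, p i • Matrix.vecMulVec (ψ i) (star (ψ i)) = alphaPow d n) := by
  let I := Fin n → Fin d × Fin d
  let e : Fin (Fintype.card I) ≃ I := (Fintype.equivFin I).symm
  let P : I → ℝ := fun j => ∏ i, qq (j i)
  let Ψ : I → ((Fin n → Fin d) × (Fin n → Fin d) → ℂ) := fun j x => ∏ i, uu (j i) (x.1 i, x.2 i)
  refine ⟨Fintype.card I, fun i => P (e i), fun i => Ψ (e i), ?_, ?_, ?_, ?_⟩
  · intro i; exact Finset.prod_nonneg fun _ _ => qq_nonneg hd _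
  · rw [e.sum_comp P]
    simp only [P, I]
    rw [← Fintype.prod_sum (fun (_ : Fin n) (j : Fin d × Fin d) => qq j)]
    simp [qq_sum hd]
  · intro i
    rw [Fintype.sum_prod_type]
    have := sum_pi_prod (fun z : Fin n → Fin d × Fin d => ∏ l, Complex.normSq (uu (e i l) (z l)))
    rw [← Fintype.prod_sum (fun (l : Fin n) (x : Fin d × Fin d) => Complex.normSq (uu (e i l) x))]
      at this
    simp only [uu_norm, Finset.prod_const_one] at this
    simp only [Ψ, map_prod]
    exact this.symm
  · rw [e.sum_comp (fun j => P j • Matrix.vecMulVec (Ψ j) (star (Ψ j)))]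
    ext x y
    rw [Matrix.sum_apply]
    simp only [Matrix.smul_apply, Matrix.vecMulVec_apply, Pi.star_apply, alphaPow, Matrix.of_apply,
      ← uu_sum hd]
    rw [Fintype.prod_sum]
    refine Finset.sum_congr rfl fun j _ => ?_
    simp only [P, Ψ, Finset.prod_mul_distrib, star_prod, Complex.real_smul, Complex.ofReal_prod]

end Helpers

/-- For all integers `d ≥ 2` and `n ≥ 1`,
`E_F(α_d^{⊗n}) ≥ n log₂(4/3)`. -/
theorem EoF_alphaPow_lower_bound (d n : ℕ) (hd : 2 ≤ d) (hn : 1 ≤ n) :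
    (n : ℝ) * Real.logb 2 (4 / 3) ≤ EoF (alphaPow d n) := by
  unfold EoF
  refine le_csInf ?_ ?_
  · obtain ⟨k, p, ψ, h1, h2, h3, h4⟩ := ens_nonempty (d := d) (n := n) hd
    exact ⟨_, k, p, ψ, h1, h2, h3, h4, rfl⟩
  · rintro E ⟨k, p, ψ, h1, h2, h3, h4, rfl⟩
    exact ensemble_bound p ψ h1 h2 h3 h4

end
end

section
/- For all integers d ≥ 2 and n ≥ 1 and every unit vector ψ in the range of (P_2^{(d)})^{⊗n} ⊆ (ℂ^d ⊗ ℂ^d)^{⊗n}, the reduced density operator ψ_{A^n} := tr_{B^n} |ψ⟩⟨ψ| obtained by tracing out the n second tensor factors satisfies tr(ψ_{A^n}²) ≤ (3/4)^n. -/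
open scoped BigOperators
open Classical
open scoped ComplexOrder

noncomputable section

namespace PurityAux

abbrev S4 := Equiv.Perm (Fin 4)

/-- sign of a permutation, by inversions -/
def sg (σ : S4) : ℤ :=
  (if σ 1 < σ 0 then -1 else 1) * (if σ 2 < σ 0 then -1 else 1) * (if σ 3 < σ 0 then -1 else 1) *
  (if σ 2 < σ 1 then -1 else 1) * (if σ 3 < σ 1 then -1 else 1) * (if σ 3 < σ 2 then -1 else 1)

def pres (σ : S4) : Bool := (σ 0).val / 2 == (σ 1).val / 2

def cc (σ : S4) : ℤ := sg σ * (if pres σ then 1 else -2)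
def ee (σ : S4) : ℤ := if pres σ then 72 * sg σ else 0

def s01 : S4 := Equiv.swap 0 1
def s23 : S4 := Equiv.swap 2 3
def s02 : S4 := Equiv.swap 0 2
def s13 : S4 := Equiv.swap 1 3

def inH (h : S4) : Prop := h = 1 ∨ h = s01 ∨ h = s23 ∨ h = s01 * s23
instance (h : S4) : Decidable (inH h) := by unfold inH; infer_instance

lemma conv1 : ∀ g : S4, ∑ h : S4, cc h * cc (h⁻¹ * g) = ee g := by decide +kernel
lemma conv2 : ∀ g : S4, ∑ h : S4, ee h * cc (h⁻¹ * g) = 576 * cc g := by decide +kernel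
lemma cc_inv : ∀ g : S4, cc g⁻¹ = cc g := by decide +kernel
lemma inH_inv : ∀ g : S4, inH g → inH g⁻¹ := by decide +kernel
lemma sg_inv : ∀ g : S4, sg g⁻¹ = sg g := by decide +kernel
lemma sg_sq : ∀ g : S4, sg g * sg g = 1 := by decide +kernel
lemma card_np : (Finset.univ.filter (fun σ : S4 => pres σ = false)).card = 16 := by decide +kernel
lemma decomp : ∀ σ : S4, ∃ h k r : S4, inH h ∧ inH k ∧ (r = 1 ∨ r = s02 ∨ r = s02 * s13) ∧
    σ = h * r * k ∧ cc σ = sg h * sg k * (if pres σ then 1 else 2) ∧ (pres σ = false → r = s02) := by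
  decide +kernel

/-! ### matrices from the group algebra -/

def UM {d : ℕ} (c : S4 → ℤ) : Matrix (Fin 4 → Fin d) (Fin 4 → Fin d) ℂ :=
  Matrix.of fun x y => ∑ σ : S4, (c σ : ℂ) * (if x ∘ σ = y then 1 else 0)

lemma UM_mul {d : ℕ} (c c' : S4 → ℤ) : (UM c : Matrix (Fin 4 → Fin d) (Fin 4 → Fin d) ℂ) * UM c'
    = UM (fun g => ∑ h : S4, c h * c' (h⁻¹ * g)) := by
  ext x y
  simp only [Matrix.mul_apply, UM, Matrix.of_apply]
  have h1 : ∀ z : Fin 4 → Fin d, (∑ σ : S4, (c σ : ℂ) * (if x ∘ σ = z then 1 else 0)) *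
      (∑ σ : S4, (c' σ : ℂ) * (if z ∘ σ = y then 1 else 0)) =
      ∑ σ : S4, if x ∘ σ = z then (c σ : ℂ) * (∑ τ : S4, (c' τ : ℂ) * (if (x ∘ σ) ∘ τ = y then 1 else 0)) else 0 := by
    intro z
    rw [Finset.sum_mul]
    refine Finset.sum_congr rfl fun σ _ => ?_
    split_ifs with h
    · rw [h, mul_one]
    · simp
  rw [Finset.sum_congr rfl fun z _ => h1 z, Finset.sum_comm]
  simp only [Finset.sum_ite_eq, Finset.mem_univ, if_true]
  push_cast
  simp only [Finset.sum_mul, Finset.mul_sum]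
  conv_rhs => rw [Finset.sum_comm]
  refine Finset.sum_congr rfl fun σ _ => ?_
  refine Fintype.sum_equiv (Equiv.mulLeft σ) _ _ fun τ => ?_
  have hcan : σ⁻¹ * (Equiv.mulLeft σ τ : S4) = τ := by simp
  rw [hcan]
  by_cases hy : (x ∘ σ) ∘ τ = y
  · have hy2 : x ∘ (Equiv.mulLeft σ τ : S4) = y := hy
    rw [if_pos hy, if_pos hy2]; ring
  · have hy2 : ¬ x ∘ (Equiv.mulLeft σ τ : S4) = y := hy
    rw [if_neg hy, if_neg hy2]; ring

def T1 (d : ℕ) : Matrix (Fin 4 → Fin d) (Fin 4 → Fin d) ℂ := (1/24 : ℂ) • UM cc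

lemma UM_smul {d : ℕ} (c : S4 → ℤ) (k : ℤ) :
    (UM (fun g => k * c g) : Matrix (Fin 4 → Fin d) (Fin 4 → Fin d) ℂ) = (k : ℂ) • UM c := by
  ext x y
  simp [UM, Finset.mul_sum]

lemma T1_cube (d : ℕ) : T1 d * T1 d * T1 d = T1 d := by
  have h1 : (fun g => ∑ h : S4, cc h * cc (h⁻¹ * g)) = ee := funext conv1
  have h2 : (fun g => ∑ h : S4, ee h * cc (h⁻¹ * g)) = fun g => 576 * cc g := funext conv2
  simp only [T1, Matrix.smul_mul, Matrix.mul_smul, UM_mul, h1, h2, UM_smul, smul_smul]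
  norm_num

lemma T1_herm (d : ℕ) (x y : Fin 4 → Fin d) : star (T1 d y x) = T1 d x y := by
  simp only [T1, UM, Matrix.smul_apply, Matrix.of_apply, smul_eq_mul, star_mul', star_sum]
  congr 1
  · simp
  refine Fintype.sum_equiv (Equiv.inv S4) _ _ fun σ => ?_
  have : (y ∘ σ = x) ↔ (x ∘ (σ⁻¹ : S4) = y) := by
    constructor
    · rintro rfl; ext j; simp
    · rintro rfl; ext j; simp
  simp only [Equiv.inv_apply, cc_inv, this]
  split_ifs <;> simp

/-! ### tensor powers -/

def tens {I : Type*} (n : ℕ) (M : Matrix I I ℂ) : Matrix (Fin n → I) (Fin n → I) ℂ :=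
  Matrix.of fun w w' => ∏ i, M (w i) (w' i)

lemma tens_mul {I : Type*} [Fintype I] (n : ℕ) (M N : Matrix I I ℂ) :
    tens n M * tens n N = tens n (M * N) := by
  ext x y
  simp only [tens, Matrix.mul_apply, Matrix.of_apply, ← Finset.prod_mul_distrib]
  rw [Finset.prod_univ_sum]
  simp

/-- Hermitian with cube equal to itself: quadratic form bounded by the norm. -/
lemma quad_le {I : Type*} [Fintype I] [DecidableEq I] (T : Matrix I I ℂ) (hT : T.IsHermitian)
    (h3 : T * T * T = T) (v : I → ℂ) :
    (dotProduct (star v) (T.mulVec v)).re ≤ ∑ x, Complex.normSq (v x) := by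
  have hA : (1 - T * T).PosSemidef := by
    have : 1 - T * T = Matrix.conjTranspose (1 - T * T) * (1 - T * T) := by
      simp only [Matrix.conjTranspose_sub, Matrix.conjTranspose_mul, Matrix.conjTranspose_one, hT.eq]
      have : T * T * (T * T) = T * T := by rw [← mul_assoc, h3]
      rw [sub_mul, mul_sub, mul_sub, this]; simp
    rw [this]; exact Matrix.posSemidef_conjTranspose_mul_self _
  have hB : ((2:ℂ) • (T * T - T)).PosSemidef := by
    have : (2:ℂ) • (T * T - T) = Matrix.conjTranspose (T * T - T) * (T * T - T) := by
      simp only [Matrix.conjTranspose_sub, Matrix.conjTranspose_mul, hT.eq]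
      have : T * T * (T * T) = T * T := by rw [← mul_assoc, h3]
      rw [sub_mul, mul_sub, mul_sub, this, h3, ← mul_assoc, h3, two_smul]; abel
    rw [this]; exact Matrix.posSemidef_conjTranspose_mul_self _
  have hA' := (Complex.le_def.1 (hA.dotProduct_mulVec_nonneg v)).1
  have hB' := (Complex.le_def.1 (hB.dotProduct_mulVec_nonneg v)).1
  have hv : (dotProduct (star v) v).re = ∑ x, Complex.normSq (v x) := by
    simp [dotProduct, Complex.normSq_apply]
  simp only [Matrix.sub_mulVec, Matrix.one_mulVec, dotProduct_sub, Matrix.smul_mulVec,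
    dotProduct_smul, smul_eq_mul, Complex.sub_re, Complex.zero_re, Complex.mul_re, Complex.re_ofNat,
    Complex.im_ofNat, hv] at hA' hB'
  linarith

/-! ### nonnegativity of partial swaps -/

lemma swap_nonneg {J : Type*} [Fintype J] [DecidableEq J] {d : ℕ} (φ : (J → Fin d) → ℂ) (D : J → Prop) :
    0 ≤ (∑ p : J → Fin d, ∑ q : J → Fin d, star (φ p) * star (φ q) *
      (φ (fun j => if D j then q j else p j) * φ (fun j => if D j then p j else q j))).re := by
  let e := Equiv.piEquivPiSubtypeProd D (fun _ => Fin d)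
  have key : (∑ p : J → Fin d, ∑ q : J → Fin d, star (φ p) * star (φ q) *
      (φ (fun j => if D j then q j else p j) * φ (fun j => if D j then p j else q j)))
      = ∑ x : ({j // D j} → Fin d), ∑ x' : ({j // D j} → Fin d),
        (∑ y : ({j // ¬ D j} → Fin d), star (φ (e.symm (x, y))) * φ (e.symm (x', y))) *
        star (∑ y : ({j // ¬ D j} → Fin d), star (φ (e.symm (x, y))) * φ (e.symm (x', y))) := by
    rw [← e.symm.sum_comp]
    simp_rw [← e.symm.sum_comp (fun q => star (φ (e.symm _)) * star (φ q) * _)]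
    simp only [Fintype.sum_prod_type]
    refine Finset.sum_congr rfl fun x _ => ?_
    rw [Finset.sum_comm]
    refine Finset.sum_congr rfl fun x' _ => ?_
    rw [star_sum, Finset.sum_mul_sum]
    refine Finset.sum_congr rfl fun y _ => Finset.sum_congr rfl fun y' _ => ?_
    have h1 : (fun j => if D j then e.symm (x', y') j else e.symm (x, y) j) = e.symm (x', y) := by
      ext j; by_cases h : D j <;> simp [e, Equiv.piEquivPiSubtypeProd, h]
    have h2 : (fun j => if D j then e.symm (x, y) j else e.symm (x', y') j) = e.symm (x, y') := by
      ext j; by_cases h : D j <;> simp [e, Equiv.piEquivPiSubtypeProd, h]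
    rw [h1, h2]
    simp only [star_mul', star_star]
    ring
  rw [key, Complex.re_sum]
  refine Finset.sum_nonneg fun x _ => ?_
  rw [Complex.re_sum]
  refine Finset.sum_nonneg fun x' _ => ?_
  exact (Complex.le_def.1 (mul_star_self_nonneg _)).1

variable {d n : ℕ}

/-- two copies of `ψ` -/
def vv (ψ : (Fin n → Fin d) × (Fin n → Fin d) → ℂ) (w : Fin n → Fin 4 → Fin d) : ℂ :=
  ψ (fun i => w i 0, fun i => w i 1) * ψ (fun i => w i 2, fun i => w i 3)

def act (τ : Fin n → S4) (w : Fin n → Fin 4 → Fin d) : Fin n → Fin 4 → Fin d := fun i => w i ∘ τ i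

def quadE : (((Fin n → Fin d) × (Fin n → Fin d)) × ((Fin n → Fin d) × (Fin n → Fin d))) ≃
    (Fin n → Fin 4 → Fin d) where
  toFun z := fun i => ![z.1.1 i, z.1.2 i, z.2.1 i, z.2.2 i]
  invFun w := ((fun i => w i 0, fun i => w i 1), (fun i => w i 2, fun i => w i 3))
  left_inv z := by simp
  right_inv w := by ext i j; fin_cases j <;> rfl

def EE (ψ : (Fin n → Fin d) × (Fin n → Fin d) → ℂ) (τ : Fin n → S4) : ℂ :=
  ∑ w, star (vv ψ w) * vv ψ (act τ w)

lemma EE_eq (ψ : (Fin n → Fin d) × (Fin n → Fin d) → ℂ) (τ : Fin n → S4) :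
    EE ψ τ = ∑ p, ∑ q, star (ψ p) * star (ψ q) * vv ψ (act τ (quadE (p, q))) := by
  rw [EE, ← quadE.sum_comp, Fintype.sum_prod_type]
  refine Finset.sum_congr rfl fun p _ => Finset.sum_congr rfl fun q _ => ?_
  congr 1
  simp [vv, quadE]

lemma EE_nonneg (ψ : (Fin n → Fin d) × (Fin n → Fin d) → ℂ) (r : Fin n → S4)
    (hr : ∀ i, r i = 1 ∨ r i = s02 ∨ r i = s02 * s13) : 0 ≤ (EE ψ r).re := by
  have h := swap_nonneg (J := Fin n ⊕ Fin n) (d := d)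
    (fun p => ψ (Equiv.sumArrowEquivProdArrow _ _ _ p))
    (fun j => Sum.elim (fun i => r i ≠ 1) (fun i => r i = s02 * s13) j)
  rw [EE_eq]
  rw [← (Equiv.sumArrowEquivProdArrow (Fin n) (Fin n) (Fin d)).sum_comp]
  refine le_of_le_of_eq h (congrArg Complex.re ?_)
  refine Finset.sum_congr rfl fun p _ => ?_
  rw [← (Equiv.sumArrowEquivProdArrow (Fin n) (Fin n) (Fin d)).sum_comp]
  refine Finset.sum_congr rfl fun q _ => ?_
  congr 1
  symm
  have n1 : s02 ≠ 1 := by decide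
  have n2 : s02 ≠ s02 * s13 := by decide
  have n3 : s02 * s13 ≠ 1 := by decide
  have a0 : s02 0 = 2 := by decide
  have a1 : s02 1 = 1 := by decide
  have a2 : s02 2 = 0 := by decide
  have a3 : s02 3 = 3 := by decide
  have b0 : s13 0 = 0 := by decide
  have b1 : s13 1 = 3 := by decide
  have b2 : s13 2 = 2 := by decide
  have b3 : s13 3 = 1 := by decide
  unfold vv
  congr 2 <;> refine Prod.ext ?_ ?_ <;> ext i <;> rcases hr i with h | h | h <;>
    simp [act, quadE, Equiv.sumArrowEquivProdArrow, h, n1, n2, n3, n3.symm, a0, a1, a2, a3, b0, b1, b2, b3]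

lemma EE_purity (ψ : (Fin n → Fin d) × (Fin n → Fin d) → ℂ) :
    EE ψ (fun _ => s02) = Matrix.trace (ptraceSnd (Matrix.vecMulVec ψ (star ψ)) *
        ptraceSnd (Matrix.vecMulVec ψ (star ψ))) := by
  have a0 : s02 0 = 2 := by decide
  have a1 : s02 1 = 1 := by decide
  have a2 : s02 2 = 0 := by decide
  have a3 : s02 3 = 3 := by decide
  rw [EE_eq]
  simp only [Fintype.sum_prod_type, Matrix.trace, Matrix.diag, Matrix.mul_apply, ptraceSnd,
    Matrix.of_apply, Matrix.vecMulVec_apply, Finset.sum_mul_sum]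
  conv_rhs => rw [Finset.sum_comm]
  refine Finset.sum_congr rfl fun a _ => ?_
  rw [Finset.sum_comm]
  refine Finset.sum_congr rfl fun a' _ => Finset.sum_congr rfl fun b _ =>
    Finset.sum_congr rfl fun b' _ => ?_
  simp [vv, act, quadE, a0, a1, a2, a3]
  ring

lemma asym_H (h : S4) (hh : inH h) (x : Fin 4 → Fin d) (p q : Fin d × Fin d) :
    asymProj d (x (h 0), x (h 1)) p * asymProj d (x (h 2), x (h 3)) q =
    (sg h : ℂ) * (asymProj d (x 0, x 1) p * asymProj d (x 2, x 3) q) := by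
  have sw : ∀ (a b : Fin d) (p : Fin d × Fin d), asymProj d (b, a) p = - asymProj d (a, b) p := by
    intro a b p
    simp only [asymProj, Matrix.of_apply]
    simp only [and_comm (a := b = p.1), and_comm (a := b = p.2)]
    ring
  have g0 : sg 1 = 1 := by decide
  have g1 : sg s01 = -1 := by decide
  have g2 : sg s23 = -1 := by decide
  have g3 : sg (s01 * s23) = 1 := by decide
  have a0 : s01 0 = 1 := by decide
  have a1 : s01 1 = 0 := by decide
  have a2 : s01 2 = 2 := by decide
  have a3 : s01 3 = 3 := by decide
  have b0 : s23 0 = 0 := by decide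
  have b1 : s23 1 = 1 := by decide
  have b2 : s23 2 = 3 := by decide
  have b3 : s23 3 = 2 := by decide
  rcases hh with h | h | h | h <;> subst h <;>
    simp [g0, g1, g2, g3, a0, a1, a2, a3, b0, b1, b2, b3, sw (x 0) (x 1), sw (x 2) (x 3)]

lemma vv_H (ψ : (Fin n → Fin d) × (Fin n → Fin d) → ℂ)
    (hrange : (asymPow d n).mulVec ψ = ψ) (h : Fin n → S4) (hh : ∀ i, inH (h i))
    (w : Fin n → Fin 4 → Fin d) :
    vv ψ (act h w) = (∏ i, (sg (h i) : ℂ)) * vv ψ w := by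
  have hv : ∀ w, vv ψ w = ∑ p, ∑ q, (∏ i, (asymProj d (w i 0, w i 1) (p.1 i, p.2 i) *
      asymProj d (w i 2, w i 3) (q.1 i, q.2 i))) * (ψ p * ψ q) := by
    intro w
    unfold vv
    conv_lhs => rw [← hrange]
    simp only [Matrix.mulVec, dotProduct, asymPow, Matrix.of_apply]
    rw [Finset.sum_mul_sum]
    refine Finset.sum_congr rfl fun p _ => Finset.sum_congr rfl fun q _ => ?_
    rw [Finset.prod_mul_distrib]; ring
  rw [hv, hv, Finset.mul_sum]
  refine Finset.sum_congr rfl fun p _ => ?_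
  rw [Finset.mul_sum]
  refine Finset.sum_congr rfl fun q _ => ?_
  rw [← mul_assoc (∏ i, (sg (h i) : ℂ)), ← Finset.prod_mul_distrib]
  congr 1
  refine Finset.prod_congr rfl fun i _ => ?_
  exact asym_H (h i) (hh i) (w i) _ _

def actE (τ : Fin n → S4) : (Fin n → Fin 4 → Fin d) ≃ (Fin n → Fin 4 → Fin d) where
  toFun := act τ
  invFun := act (fun i => (τ i)⁻¹)
  left_inv w := by ext i j; simp [act]
  right_inv w := by ext i j; simp [act]

lemma EE_H (ψ : (Fin n → Fin d) × (Fin n → Fin d) → ℂ)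
    (hrange : (asymPow d n).mulVec ψ = ψ) (h k r : Fin n → S4) (hh : ∀ i, inH (h i))
    (hk : ∀ i, inH (k i)) :
    EE ψ (fun i => h i * r i * k i) = (∏ i, ((sg (h i) * sg (k i) : ℤ) : ℂ)) * EE ψ r := by
  unfold EE
  rw [Finset.mul_sum, ← (actE h).symm.sum_comp]
  refine Finset.sum_congr rfl fun w _ => ?_
  have e1 : act (fun i => h i * r i * k i) ((actE h).symm w) = act k (act r w) := by
    ext i j; simp [act, actE]
  have e2 : (actE h).symm w = act (fun i => (h i)⁻¹) w := rfl
  rw [e1, e2, vv_H ψ hrange _ hk, vv_H ψ hrange _ (fun i => inH_inv _ (hh i))]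
  simp only [sg_inv, star_mul', star_prod, Int.cast_mul, Finset.prod_mul_distrib]
  have : ∀ z : ℤ, star (z : ℂ) = z := fun z => by simp
  simp only [this]
  ring

lemma quad_expand (ψ : (Fin n → Fin d) × (Fin n → Fin d) → ℂ) :
    dotProduct (star (vv ψ)) ((tens n (T1 d)).mulVec (vv ψ)) =
    ∑ τ : Fin n → S4, (∏ i, (1/24 : ℂ) * (cc (τ i) : ℂ)) * EE ψ τ := by
  have h1 : ∀ w w' : Fin n → Fin 4 → Fin d, tens n (T1 d) w w' =
      ∑ τ : Fin n → S4, (∏ i, (1/24 : ℂ) * (cc (τ i) : ℂ)) * (if act τ w = w' then 1 else 0) := by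
    intro w w'
    simp only [tens, T1, UM, Matrix.of_apply, Matrix.smul_apply, smul_eq_mul, Finset.mul_sum]
    rw [Finset.prod_univ_sum]
    simp only [Fintype.piFinset_univ]
    refine Finset.sum_congr rfl fun τ _ => ?_
    simp only [← mul_assoc]
    rw [Finset.prod_mul_distrib]
    congr 1
    rw [Finset.prod_ite_zero]
    simp [act, funext_iff]
  have h2 : ∀ w, (tens n (T1 d)).mulVec (vv ψ) w =
      ∑ τ : Fin n → S4, (∏ i, (1/24 : ℂ) * (cc (τ i) : ℂ)) * vv ψ (act τ w) := by
    intro w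
    simp only [dotProduct, Matrix.mulVec, h1, Finset.sum_mul]
    rw [Finset.sum_comm]
    refine Finset.sum_congr rfl fun τ _ => ?_
    simp
  simp only [dotProduct, h2, EE, Finset.mul_sum]
  rw [Finset.sum_comm]
  refine Finset.sum_congr rfl fun τ _ => Finset.sum_congr rfl fun w _ => ?_
  simp only [Pi.star_apply]
  ring

lemma main (ψ : (Fin n → Fin d) × (Fin n → Fin d) → ℂ)
    (hψ : ∑ v, Complex.normSq (ψ v) = 1)
    (hrange : (asymPow d n).mulVec ψ = ψ) :
    (EE ψ (fun _ => s02)).re ≤ (3 / 4 : ℝ) ^ n := by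
  have hTh : (tens n (T1 d)).IsHermitian := by
    ext x y
    simp only [Matrix.conjTranspose_apply, tens, Matrix.of_apply, star_prod, T1_herm]
  have hT3 : tens n (T1 d) * tens n (T1 d) * tens n (T1 d) = tens n (T1 d) := by
    rw [tens_mul, tens_mul, T1_cube]
  have hq := quad_le _ hTh hT3 (vv ψ)
  have hnorm : ∑ w, Complex.normSq (vv ψ w) = 1 := by
    rw [← quadE.sum_comp, Fintype.sum_prod_type]
    have : ∀ p q, Complex.normSq (vv ψ (quadE (p, q))) = Complex.normSq (ψ p) * Complex.normSq (ψ q) := by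
      intro p q; simp [vv, quadE]
    simp only [this, ← Finset.mul_sum, hψ, mul_one]
  rw [hnorm, quad_expand, Complex.re_sum] at hq
  choose h k r hh hk hr hσ hc hp using decomp
  have hterm : ∀ τ : Fin n → S4, (∏ i, (1/24 : ℂ) * (cc (τ i) : ℂ)) * EE ψ τ =
      ((∏ i, (if pres (τ i) then (1/24 : ℝ) else 1/12) : ℝ) : ℂ) * EE ψ (fun i => r (τ i)) := by
    intro τ
    have : EE ψ τ = EE ψ (fun i => h (τ i) * r (τ i) * k (τ i)) := by
      congr 1; ext1 i; exact hσ _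
    rw [this, EE_H ψ hrange _ _ _ (fun i => hh _) (fun i => hk _), ← mul_assoc,
      ← Finset.prod_mul_distrib]
    congr 1
    push_cast
    refine Finset.prod_congr rfl fun i _ => ?_
    rw [hc]
    have s1 : (sg (h (τ i)) : ℂ) * sg (h (τ i)) = 1 := by exact_mod_cast sg_sq _
    have s2 : (sg (k (τ i)) : ℂ) * sg (k (τ i)) = 1 := by exact_mod_cast sg_sq _
    push_cast
    split_ifs <;> push_cast
    · linear_combination (1/24 : ℂ) * (sg (k (τ i)) : ℂ) * sg (k (τ i)) * s1 + (1/24 : ℂ) * s2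
    · linear_combination (1/12 : ℂ) * (sg (k (τ i)) : ℂ) * sg (k (τ i)) * s1 + (1/12 : ℂ) * s2
  simp only [hterm, Complex.re_ofReal_mul] at hq
  have hge : ∑ τ ∈ Fintype.piFinset (fun _ : Fin n => Finset.univ.filter (fun σ : S4 => pres σ = false)),
      (1/12 : ℝ) ^ n * (EE ψ (fun _ => s02)).re ≤ 1 := by
    refine le_trans ?_ hq
    refine le_trans (le_of_eq ?_) (Finset.sum_le_sum_of_subset_of_nonneg (Finset.subset_univ
      (Fintype.piFinset (fun _ : Fin n => Finset.univ.filter (fun σ : S4 => pres σ = false)))) ?_)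
    · refine Finset.sum_congr rfl fun τ hτ => ?_
      simp only [Fintype.mem_piFinset, Finset.mem_filter, Finset.mem_univ, true_and] at hτ
      have e1 : (fun i => r (τ i)) = fun _ => s02 := funext fun i => hp _ (hτ i)
      rw [e1]
      simp [hτ]
    · intro τ _ _
      refine mul_nonneg (Finset.prod_nonneg fun i _ => ?_) (EE_nonneg ψ _ fun i => hr _)
      split_ifs <;> norm_num
  rw [Finset.sum_const, Fintype.card_piFinset] at hge
  simp only [card_np, Finset.prod_const, Finset.card_univ, Fintype.card_fin, nsmul_eq_mul] at hge
  push_cast at hge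
  rw [← mul_assoc, ← mul_pow] at hge
  have h43 : ((3/4 : ℝ)) ^ n * (16 * (1/12 : ℝ)) ^ n = 1 := by rw [← mul_pow]; norm_num
  calc (EE ψ (fun _ => s02)).re
      = (3/4 : ℝ) ^ n * ((16 * (1/12 : ℝ)) ^ n * (EE ψ (fun _ => s02)).re) := by
        rw [← mul_assoc, h43, one_mul]
    _ ≤ (3/4 : ℝ) ^ n * 1 := by gcongr
    _ = _ := mul_one _

end PurityAux

/-- For all integers `d ≥ 2` and `n ≥ 1` and every unit vector `ψ` in the
range of `(P₂^{(d)})^{⊗n}`, the reduced state `ψ_{A^n} = tr_{B^n} |ψ⟩⟨ψ|` satisfies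
`tr(ψ_{A^n}²) ≤ (3/4)^n`. -/
theorem purity_antisym_le (d n : ℕ) (hd : 2 ≤ d) (hn : 1 ≤ n)
    (ψ : (Fin n → Fin d) × (Fin n → Fin d) → ℂ)
    (hψ : ∑ v, Complex.normSq (ψ v) = 1)
    (hrange : (asymPow d n).mulVec ψ = ψ) :
    (Matrix.trace (ptraceSnd (Matrix.vecMulVec ψ (star ψ)) *
        ptraceSnd (Matrix.vecMulVec ψ (star ψ)))).re ≤ (3 / 4 : ℝ) ^ n := by
  rw [← PurityAux.EE_purity]
  exact PurityAux.main ψ hψ hrange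

end
end

section
/- For every integer n ≥ 1, E_F(α_3^{⊗n}) = n, where α_3^{⊗n} is viewed as a bipartite state on ((ℂ³)^{⊗n})_A ⊗ ((ℂ³)^{⊗n})_B by grouping the n first tensor factors on one side and the n second tensor factors on the other. (Yura's result, recovered in the paper; in particular the entanglement cost of α_3 equals 1.) -/
open scoped BigOperators
open Classical
open scoped ComplexOrder

noncomputable section

namespace Yura

def eps (a b c : Fin 3) : ℤ := ((b.val : ℤ) - a.val) * ((c.val : ℤ) - a.val) * ((c.val : ℤ) - b.val) / 2

def dl (a b : Fin 3) : ℤ := if a = b then 1 else 0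

theorem eps1 : ∀ a b a' b' : Fin 3, ∑ c, eps a b c * eps a' b' c = dl a a' * dl b b' - dl a b' * dl b a' := by
  decide +kernel

theorem eps2 : ∀ a a' c c' : Fin 3, ∑ b, eps a b c * eps a' b c' = dl a a' * dl c c' - dl a c' * dl a' c := by
  decide +kernel

theorem eps3 : ∀ c c' d d' : Fin 3, ∑ a, ∑ a', (dl a a' * dl c c' - dl a c' * dl a' c) * (dl a a' * dl d d' - dl a d' * dl a' d)
   = dl c c' * dl d d' + dl c d * dl c' d' := by
  decide +kernel

theorem eps4 : ∀ c d' : Fin 3, ∑ c', ∑ d, (dl c c' * dl d d' + dl c d * dl c' d') = 2 := by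
  decide +kernel

theorem eps5 : ∀ c' d : Fin 3, ∑ c, ∑ d', (dl c c' * dl d d' + dl c d * dl c' d') = 2 := by
  decide +kernel

theorem eps6 : ∀ a a'' c : Fin 3, ∑ a', (dl a a' * dl c c - dl a c * dl a' c) * (dl a' a'' * dl c c - dl a' c * dl a'' c) = dl a a'' * dl c c - dl a c * dl a'' c := by
  decide +kernel

theorem eps7 : ∀ c : Fin 3, ∑ a, ∑ b, eps a b c * eps a b c = 2 := by
  decide +kernel

theorem eps8 : ∀ a b c d : Fin 3, ∑ x, ∑ y, (dl a x * dl b y - dl a y * dl b x) * (dl x c * dl y d - dl x d * dl y c) = 2 * (dl a c * dl b d - dl a d * dl b c) := by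
  decide +kernel

theorem sum_prod1 {n : ℕ} (f : Fin n → Fin 3 → ℤ) :
    ∑ x : Fin n → Fin 3, ∏ i, f i (x i) = ∏ i, ∑ j, f i j := by
  rw [Finset.prod_univ_sum, Fintype.piFinset_univ]

theorem sum_prod2 {n : ℕ} (f : Fin n → Fin 3 → Fin 3 → ℤ) :
    ∑ x : Fin n → Fin 3, ∑ y : Fin n → Fin 3, ∏ i, f i (x i) (y i) = ∏ i, ∑ j, ∑ k, f i j k := by
  simp_rw [fun x : Fin n → Fin 3 => sum_prod1 (fun i k => f i (x i) k)]
  exact sum_prod1 (fun i j => ∑ k, f i j k)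

abbrev V (n : ℕ) := Fin n → Fin 3

def M {n : ℕ} (a b c : V n) : ℤ := ∏ i, eps (a i) (b i) (c i)
def L {n : ℕ} (a a' c c' : V n) : ℤ := ∏ i, (dl (a i) (a' i) * dl (c i) (c' i) - dl (a i) (c' i) * dl (a' i) (c i))
def K {n : ℕ} (c c' d d' : V n) : ℤ := ∏ i, (dl (c i) (c' i) * dl (d i) (d' i) + dl (c i) (d i) * dl (c' i) (d' i))
def Q {n : ℕ} (a b a' b' : V n) : ℤ := ∏ i, (dl (a i) (a' i) * dl (b i) (b' i) - dl (a i) (b' i) * dl (b i) (a' i))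

variable {n : ℕ}

theorem M1 (a b a' b' : V n) : ∑ c, M a b c * M a' b' c = Q a b a' b' := by
  simp only [M, Q, ← Finset.prod_mul_distrib, ← eps1]
  exact sum_prod1 (fun i c => eps (a i) (b i) c * eps (a' i) (b' i) c)

theorem M2 (a a' c c' : V n) : ∑ b, M a b c * M a' b c' = L a a' c c' := by
  simp only [M, L, ← Finset.prod_mul_distrib, ← eps2]
  exact sum_prod1 (fun i b => eps (a i) b (c i) * eps (a' i) b (c' i))

theorem M3 (c c' d d' : V n) : ∑ a, ∑ a', L a a' c c' * L a a' d d' = K c c' d d' := by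
  simp only [K, L, ← Finset.prod_mul_distrib, ← eps3]
  exact sum_prod2 (fun i a a' => (dl a a' * dl (c i) (c' i) - dl a (c' i) * dl a' (c i)) * (dl a a' * dl (d i) (d' i) - dl a (d' i) * dl a' (d i)))

theorem M4 (c d' : V n) : ∑ c', ∑ d, K c c' d d' = 2 ^ n := by
  simp only [K]
  rw [sum_prod2 (fun i c' d => dl (c i) c' * dl d (d' i) + dl (c i) d * dl c' (d' i))]
  simp [eps4]

theorem M5 (c' d : V n) : ∑ c, ∑ d', K c c' d d' = 2 ^ n := by
  simp only [K]
  rw [sum_prod2 (fun i c d' => dl c (c' i) * dl (d i) d' + dl c (d i) * dl (c' i) d')]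
  simp [eps5]

theorem M6 (a a'' c : V n) : ∑ a', L a a' c c * L a' a'' c c = L a a'' c c := by
  simp only [L, ← Finset.prod_mul_distrib]
  rw [sum_prod1 (fun i x => (dl (a i) x * dl (c i) (c i) - dl (a i) (c i) * dl x (c i)) * (dl x (a'' i) * dl (c i) (c i) - dl x (c i) * dl (a'' i) (c i)))]
  simp only [eps6]

theorem M7 (c : V n) : ∑ a, ∑ b, M a b c * M a b c = 2 ^ n := by
  simp only [M, ← Finset.prod_mul_distrib]
  rw [sum_prod2 (fun i a b => eps a b (c i) * eps a b (c i))]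
  simp [eps7]

theorem M8 (a b c d : V n) : ∑ x, ∑ y, Q a b x y * Q x y c d = 2 ^ n * Q a b c d := by
  simp only [Q, ← Finset.prod_mul_distrib]
  rw [sum_prod2 (fun i x y => (dl (a i) x * dl (b i) y - dl (a i) y * dl (b i) x) * (dl x (c i) * dl y (d i) - dl x (d i) * dl y (c i)))]
  simp only [eps8, Finset.prod_mul_distrib]
  simp

theorem K_nonneg (c c' d d' : V n) : 0 ≤ K c c' d d' := by
  refine Finset.prod_nonneg fun i _ => ?_
  simp only [dl]; split_ifs <;> simp

theorem alpha_eq (p q : V n × V n) :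
    alphaPow 3 n p q = ((6 : ℂ) ^ n)⁻¹ * (Q p.1 p.2 q.1 q.2 : ℤ) := by
  have h3 : ((Nat.choose 3 2 : ℕ) : ℂ) = 3 := by norm_num [Nat.choose]
  simp only [alphaPow, antisymState, asymProj, Matrix.of_apply, Matrix.smul_apply, h3, Q, smul_eq_mul]
  push_cast
  rw [← inv_pow]
  have : ((6:ℂ)⁻¹) ^ n = ∏ i : Fin n, (6:ℂ)⁻¹ := by simp
  rw [this, ← Finset.prod_mul_distrib]
  refine Finset.prod_congr rfl fun i _ => ?_
  rw [← mul_assoc]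
  congr 1
  · norm_num
  · simp only [dl, ite_and]
    push_cast
    congr 1 <;> split_ifs <;> simp

/-- purity bound in terms of φ -/
theorem purity_phi (φ : V n → ℂ) :
    ∑ a, ∑ a', ‖∑ c, ∑ c', (L a a' c c' : ℂ) * (φ c * star (φ c'))‖ ^ 2
      ≤ 2 ^ n * (∑ c, ‖φ c‖ ^ 2) ^ 2 := by
  have key : ((∑ a, ∑ a', ‖∑ c, ∑ c', (L a a' c c' : ℂ) * (φ c * star (φ c'))‖ ^ 2 : ℝ) : ℂ)
      = ∑ C : V n × V n, ∑ D : V n × V n, (K C.1 C.2 D.1 D.2 : ℂ) *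
        ((φ C.1 * star (φ C.2)) * star (φ D.1 * star (φ D.2))) := by
    push_cast
    have h1 : ∀ a a', ((‖∑ c, ∑ c', (L a a' c c' : ℂ) * (φ c * star (φ c'))‖ : ℂ)) ^ 2
       = ∑ C : V n × V n, ∑ D : V n × V n, ((L a a' C.1 C.2 * L a a' D.1 D.2 : ℤ) : ℂ) *
        ((φ C.1 * star (φ C.2)) * star (φ D.1 * star (φ D.2))) := by
      intro a a'
      rw [← Complex.mul_conj', ← Fintype.sum_prod_type']
      rw [map_sum, Finset.sum_mul_sum]
      refine Finset.sum_congr rfl fun C _ => Finset.sum_congr rfl fun D _ => ?_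
      simp
      ring
    simp_rw [h1]
    rw [← Fintype.sum_prod_type' (f := fun a a' : V n => ∑ C : V n × V n, ∑ D : V n × V n, ((L a a' C.1 C.2 * L a a' D.1 D.2 : ℤ) : ℂ) *
        ((φ C.1 * star (φ C.2)) * star (φ D.1 * star (φ D.2))))]
    rw [Finset.sum_comm]
    refine Finset.sum_congr rfl fun C _ => ?_
    rw [Finset.sum_comm]
    refine Finset.sum_congr rfl fun D _ => ?_
    rw [← Finset.sum_mul, ← M3]
    push_cast
    rw [Fintype.sum_prod_type]
  have hb : ∑ a, ∑ a', ‖∑ c, ∑ c', (L a a' c c' : ℂ) * (φ c * star (φ c'))‖ ^ 2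
      ≤ ∑ C : V n × V n, ∑ D : V n × V n, (K C.1 C.2 D.1 D.2 : ℝ) *
        (((‖φ C.1‖ ^ 2 * ‖φ D.2‖ ^ 2) + (‖φ C.2‖ ^ 2 * ‖φ D.1‖ ^ 2)) / 2) := by
    refine (le_abs_self _).trans ?_
    rw [← Real.norm_eq_abs, ← Complex.norm_real, key]
    refine (norm_sum_le _ _).trans (Finset.sum_le_sum fun C _ => ?_)
    refine (norm_sum_le _ _).trans (Finset.sum_le_sum fun D _ => ?_)
    rw [norm_mul]
    have hk : ‖(K C.1 C.2 D.1 D.2 : ℂ)‖ = (K C.1 C.2 D.1 D.2 : ℝ) := by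
      rw [Complex.norm_intCast, abs_of_nonneg]
      exact_mod_cast K_nonneg _ _ _ _
    rw [hk]
    refine mul_le_mul_of_nonneg_left ?_ (by exact_mod_cast K_nonneg _ _ _ _)
    simp only [norm_mul, norm_star]
    nlinarith [sq_nonneg (‖φ C.1‖ * ‖φ D.2‖ - ‖φ C.2‖ * ‖φ D.1‖)]
  refine hb.trans (le_of_eq ?_)
  have e1 : ∑ c, ∑ c', ∑ d, ∑ d', (K c c' d d' : ℝ) * (‖φ c‖ ^ 2 * ‖φ d'‖ ^ 2)
      = 2 ^ n * (∑ c, ‖φ c‖ ^ 2) ^ 2 := by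
    calc _ = ∑ c, ∑ d', ∑ c', ∑ d, (K c c' d d' : ℝ) * (‖φ c‖ ^ 2 * ‖φ d'‖ ^ 2) := by
          refine Finset.sum_congr rfl fun c _ => ?_
          rw [Finset.sum_comm' (t' := Finset.univ) (s' := fun _ => Finset.univ) (by simp)]
          rw [Finset.sum_congr rfl (fun d _ => Finset.sum_comm)]
          rw [Finset.sum_comm]
          refine Finset.sum_congr rfl fun d' _ => Finset.sum_comm
      _ = ∑ c, ∑ d', 2 ^ n * (‖φ c‖ ^ 2 * ‖φ d'‖ ^ 2) := by
          refine Finset.sum_congr rfl fun c _ => Finset.sum_congr rfl fun d' _ => ?_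
          simp_rw [← Finset.sum_mul]
          congr 1
          exact_mod_cast M4 c d'
      _ = _ := by
          rw [sq, Finset.sum_mul_sum, Finset.mul_sum]
          simp_rw [Finset.mul_sum]
  have e2 : ∑ c, ∑ c', ∑ d, ∑ d', (K c c' d d' : ℝ) * (‖φ c'‖ ^ 2 * ‖φ d‖ ^ 2)
      = 2 ^ n * (∑ c, ‖φ c‖ ^ 2) ^ 2 := by
    calc _ = ∑ c', ∑ d, ∑ c, ∑ d', (K c c' d d' : ℝ) * (‖φ c'‖ ^ 2 * ‖φ d‖ ^ 2) := by
          rw [Finset.sum_comm]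
          refine Finset.sum_congr rfl fun c _ => Finset.sum_comm
      _ = ∑ c', ∑ d, 2 ^ n * (‖φ c'‖ ^ 2 * ‖φ d‖ ^ 2) := by
          refine Finset.sum_congr rfl fun c _ => Finset.sum_congr rfl fun d' _ => ?_
          simp_rw [← Finset.sum_mul]
          congr 1
          exact_mod_cast M5 c d'
      _ = _ := by
          rw [sq, Finset.sum_mul_sum, Finset.mul_sum]
          simp_rw [Finset.mul_sum]
  simp only [Fintype.sum_prod_type]
  have : ∀ x : ℝ, x = (x + x) / 2 := fun x => by ring
  rw [this (2 ^ n * _)]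
  nth_rewrite 1 [← e1]
  rw [← e2]
  simp only [← Finset.sum_add_distrib, Finset.sum_div]
  refine Finset.sum_congr rfl fun c _ => Finset.sum_congr rfl fun c' _ => Finset.sum_congr rfl fun d _ => Finset.sum_congr rfl fun d' _ => ?_
  ring

theorem trace_sq {ι : Type*} [Fintype ι] [DecidableEq ι] {ρ : Matrix ι ι ℂ} (h : ρ.IsHermitian) :
    ∑ i, h.eigenvalues i ^ 2 = ∑ a, ∑ a', ‖ρ a a'‖ ^ 2 := by
  have h1 : (ρ * ρ).trace = ∑ i, ((h.eigenvalues i : ℂ)) ^ 2 := by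
    conv_lhs => rw [h.spectral_theorem, ← map_mul, Unitary.conjStarAlgAut_apply, Matrix.trace_mul_cycle]
    simp [Matrix.trace, sq]
  have h2 : (ρ * ρ).trace = ∑ a, ∑ a', ((‖ρ a a'‖ : ℂ)) ^ 2 := by
    simp only [Matrix.trace, Matrix.diag, Matrix.mul_apply]
    refine Finset.sum_congr rfl fun a _ => Finset.sum_congr rfl fun a' _ => ?_
    rw [← Complex.mul_conj']
    congr 1
    exact (h.apply a' a).symm
  rw [h1] at h2
  exact_mod_cast h2

theorem sum_eig {ι : Type*} [Fintype ι] [DecidableEq ι] {ρ : Matrix ι ι ℂ} (h : ρ.IsHermitian)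
    (ht : ρ.trace = 1) : ∑ i, h.eigenvalues i = 1 := by
  rw [h.trace_eq_sum_eigenvalues] at ht
  have := congrArg Complex.re ht
  simpa using this

theorem ent_lower {ι : Type*} [Fintype ι] [DecidableEq ι] {ρ : Matrix ι ι ℂ} (h : ρ.PosSemidef)
    (ht : ρ.trace = 1) (n : ℕ) (hp : ∑ a, ∑ a', ‖ρ a a'‖ ^ 2 ≤ ((2:ℝ) ^ n)⁻¹) :
    (n : ℝ) ≤ vnEntropy ρ := by
  have hh := h.1
  rw [vnEntropy, dif_pos hh]
  have h2 : (0:ℝ) < 2 ^ n := by positivity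
  have hl : 0 < Real.log 2 := Real.log_pos (by norm_num)
  have key : ∀ i, hh.eigenvalues i * Real.logb 2 (hh.eigenvalues i) ≤
      (-n) * hh.eigenvalues i + (2 ^ n * hh.eigenvalues i ^ 2 - hh.eigenvalues i) / Real.log 2 := by
    intro i
    rcases (h.eigenvalues_nonneg i).eq_or_lt with h0 | h0
    · rw [← h0]; simp
    · set x := hh.eigenvalues i
      have h3 := Real.log_le_sub_one_of_pos (mul_pos h2 h0)
      rw [Real.log_mul h2.ne' h0.ne', Real.log_pow] at h3
      rw [Real.logb]
      have : x * (Real.log x / Real.log 2) = (x * Real.log x) / Real.log 2 := by ring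
      rw [this, div_le_iff₀ hl, add_mul, div_mul_cancel₀ _ hl.ne']
      nlinarith
  have hs := Finset.sum_le_sum (fun i (_ : i ∈ Finset.univ) => key i)
  rw [Finset.sum_add_distrib, ← Finset.mul_sum, ← Finset.sum_div, Finset.sum_sub_distrib,
    ← Finset.mul_sum, sum_eig hh ht, trace_sq hh] at hs
  have : (2 ^ n * (∑ a, ∑ a', ‖ρ a a'‖ ^ 2) - 1) / Real.log 2 ≤ 0 := by
    refine div_nonpos_of_nonpos_of_nonneg ?_ hl.le
    have := mul_le_mul_of_nonneg_left hp h2.le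
    rw [mul_inv_cancel₀ h2.ne'] at this
    linarith
  linarith

theorem ent_eq {ι : Type*} [Fintype ι] [DecidableEq ι] {ρ : Matrix ι ι ℂ} (h : ρ.IsHermitian)
    (ht : ρ.trace = 1) (n : ℕ) (hp : ρ * ρ = ((2:ℂ) ^ n)⁻¹ • ρ) :
    vnEntropy ρ = n := by
  rw [vnEntropy, dif_pos h]
  have key : ∀ i, h.eigenvalues i * Real.logb 2 (h.eigenvalues i) = (-n) * h.eigenvalues i := by
    intro i
    set x := h.eigenvalues i with hx
    have hv := h.mulVec_eigenvectorBasis i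
    have hne : ((h.eigenvectorBasis i).ofLp : ι → ℂ) ≠ 0 := by
      intro h0
      have := h.eigenvectorBasis.orthonormal.ne_zero i
      apply this
      ext j
      exact congrFun h0 j
    set v : ι → ℂ := (h.eigenvectorBasis i).ofLp
    have e1 : (ρ * ρ).mulVec v = (x * x) • v := by
      rw [← Matrix.mulVec_mulVec, hv, Matrix.mulVec_smul, hv, smul_smul]
    rw [hp, Matrix.smul_mulVec, hv] at e1
    obtain ⟨j, hj⟩ := Function.ne_iff.1 hne
    have e2 := congrFun e1 j
    simp only [Pi.smul_apply, smul_eq_mul, Complex.real_smul] at e2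
    rw [← mul_assoc] at e2
    have e3 := mul_right_cancel₀ hj e2
    have e4 : ((2:ℝ) ^ n)⁻¹ * x = x * x := by
      rw [← hx] at e3
      apply Complex.ofReal_injective
      push_cast
      exact e3.trans (Complex.ofReal_mul _ _)
    by_cases h0 : x = 0
    · rw [h0]; simp
    · have e5 := mul_right_cancel₀ h0 e4
      rw [← e5, Real.logb_inv, Real.logb_pow, Real.logb_self_eq_one (by norm_num)]
      ring
  simp_rw [key]
  rw [← Finset.mul_sum, sum_eig h ht]
  ring

theorem pt_apply (ψ : V n × V n → ℂ) (a a' : V n) :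
    ptraceSnd (Matrix.vecMulVec ψ (star ψ)) a a' = ∑ b, ψ (a, b) * star (ψ (a', b)) := by
  simp [ptraceSnd, Matrix.vecMulVec_apply]

theorem pt_psd (ψ : V n × V n → ℂ) : (ptraceSnd (Matrix.vecMulVec ψ (star ψ))).PosSemidef := by
  have : ptraceSnd (Matrix.vecMulVec ψ (star ψ)) =
      (Matrix.of fun a b => ψ (a, b)) * (Matrix.of fun a b => ψ (a, b)).conjTranspose := by
    ext a a'
    rw [pt_apply]
    simp [Matrix.mul_apply]
  rw [this]
  exact Matrix.posSemidef_self_mul_conjTranspose _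

theorem normSq_c (z : ℂ) : z * star z = (Complex.normSq z : ℂ) := Complex.mul_conj z

theorem pt_trace (ψ : V n × V n → ℂ) (h : ∑ x, Complex.normSq (ψ x) = 1) :
    (ptraceSnd (Matrix.vecMulVec ψ (star ψ))).trace = 1 := by
  simp only [Matrix.trace, Matrix.diag, pt_apply, normSq_c]
  rw [Fintype.sum_prod_type] at h
  exact_mod_cast h

/-- entropy bound for vectors in the support -/
theorem ent_supp (ψ : V n × V n → ℂ) (h : ∑ x, Complex.normSq (ψ x) = 1)
    (hQ : ∀ a b, ∑ a', ∑ b', (Q a b a' b' : ℂ) * ψ (a', b') = 2 ^ n * ψ (a, b)) :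
    (n : ℝ) ≤ vnEntropy (ptraceSnd (Matrix.vecMulVec ψ (star ψ))) := by
  refine ent_lower (pt_psd ψ) (pt_trace ψ h) n ?_
  set φ : V n → ℂ := fun c => ∑ a, ∑ b, (M a b c : ℂ) * ψ (a, b) with hφ
  have hψ : ∀ a b, ∑ c, (M a b c : ℂ) * φ c = 2 ^ n * ψ (a, b) := by
    intro a b
    rw [← hQ]
    simp only [hφ, Finset.mul_sum]
    rw [Finset.sum_comm]
    refine Finset.sum_congr rfl fun a' _ => ?_
    rw [Finset.sum_comm]
    refine Finset.sum_congr rfl fun b' _ => ?_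
    rw [← M1]
    push_cast
    rw [Finset.sum_mul]
    refine Finset.sum_congr rfl fun c _ => ?_
    ring
  have hn : ∑ c, ‖φ c‖ ^ 2 = 2 ^ n := by
    have : ∑ c, ((‖φ c‖ : ℂ)) ^ 2 = 2 ^ n := by
      calc _ = ∑ c, ∑ a, ∑ b, (M a b c : ℂ) * φ c * star (ψ (a, b)) := by
            refine Finset.sum_congr rfl fun c _ => ?_
            rw [← Complex.mul_conj']
            conv_lhs => rw [hφ]
            simp only [map_sum, Finset.mul_sum]
            refine Finset.sum_congr rfl fun a _ => Finset.sum_congr rfl fun b _ => ?_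
            simp [hφ]
            ring
        _ = ∑ a, ∑ b, ∑ c, (M a b c : ℂ) * φ c * star (ψ (a, b)) := by
            rw [Finset.sum_comm]
            exact Finset.sum_congr rfl fun a _ => Finset.sum_comm
        _ = ∑ a, ∑ b, 2 ^ n * (Complex.normSq (ψ (a, b)) : ℂ) := by
            refine Finset.sum_congr rfl fun a _ => Finset.sum_congr rfl fun b _ => ?_
            rw [← Finset.sum_mul, hψ, mul_assoc, normSq_c]
        _ = 2 ^ n := by
            simp only [← Finset.mul_sum]
            rw [Fintype.sum_prod_type] at h
            have : ∑ a, ∑ b, (Complex.normSq (ψ (a, b)) : ℂ) = 1 := by exact_mod_cast h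
            rw [this, mul_one]
    exact_mod_cast this
  have hp := purity_phi φ
  rw [hn] at hp
  have hG : ∀ a a', ∑ c, ∑ c', (L a a' c c' : ℂ) * (φ c * star (φ c')) =
      4 ^ n * ptraceSnd (Matrix.vecMulVec ψ (star ψ)) a a' := by
    intro a a'
    rw [pt_apply]
    calc _ = ∑ b, (∑ c, (M a b c : ℂ) * φ c) * star (∑ c', (M a' b c' : ℂ) * φ c') := by
          simp only [star_sum, Finset.sum_mul_sum]
          rw [Finset.sum_comm (s := (Finset.univ : Finset (V n))) (f := fun b c => ∑ c', (M a b c : ℂ) * φ c * star ((M a' b c' : ℂ) * φ c'))]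
          refine Finset.sum_congr rfl fun c _ => ?_
          rw [Finset.sum_comm]
          refine Finset.sum_congr rfl fun c' _ => ?_
          rw [← M2]
          push_cast
          rw [Finset.sum_mul]
          refine Finset.sum_congr rfl fun b _ => ?_
          simp
          ring
      _ = _ := by
          simp only [hψ, Finset.mul_sum]
          refine Finset.sum_congr rfl fun b _ => ?_
          have : (4:ℂ) ^ n = 2 ^ n * 2 ^ n := by rw [← mul_pow]; norm_num
          rw [this]
          simp
          ring
  simp only [hG, norm_mul, mul_pow, ← Finset.mul_sum] at hp
  have e : (‖(4:ℂ) ^ n‖) ^ 2 = 2 ^ n * (2 ^ n) ^ 2 * 2 ^ n := by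
    rw [norm_pow]
    have : ‖(4:ℂ)‖ = 4 := by norm_num
    rw [this, ← pow_mul, mul_comm n 2, pow_mul, ← pow_mul 2 n 2, mul_comm n 2, pow_mul, ← mul_pow, ← mul_pow]
    norm_num
  rw [e, mul_assoc] at hp
  have h2 : (0:ℝ) < 2 ^ n := by positivity
  have := le_of_mul_le_mul_left (hp.trans_eq (mul_one _).symm) (by positivity)
  rw [← one_div, le_div_iff₀ h2]
  linarith

/-- vectors in an ensemble lie in the support -/
theorem supp_of_ensemble {k : ℕ} (p : Fin k → ℝ) (ψ : Fin k → V n × V n → ℂ) (hp : ∀ i, 0 ≤ p i)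
    (h : ∑ i, p i • Matrix.vecMulVec (ψ i) (star (ψ i)) = alphaPow 3 n) (i : Fin k) (hi : p i ≠ 0)
    (a b : V n) :
    ∑ a', ∑ b', (Q a b a' b' : ℂ) * ψ i (a', b') = 2 ^ n * ψ i (a, b) := by
  set v : V n × V n → ℂ := fun x => (Q a b x.1 x.2 : ℂ) - 2 ^ n * (if x = (a, b) then 1 else 0) with hv
  have hvs : ∀ x, star (v x) = v x := by
    intro x
    simp only [hv, star_sub, star_mul']
    split_ifs <;> simp
  have hα : ∀ y, ∑ x, v x * alphaPow 3 n x y = 0 := by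
    intro y
    simp only [hv, alpha_eq, sub_mul, Finset.sum_sub_distrib]
    have h1 : ∑ x : V n × V n, (Q a b x.1 x.2 : ℂ) * (((6:ℂ) ^ n)⁻¹ * (Q x.1 x.2 y.1 y.2 : ℂ)) =
        ((6:ℂ) ^ n)⁻¹ * (2 ^ n * (Q a b y.1 y.2 : ℂ)) := by
      have := M8 a b y.1 y.2
      have h8 : ∑ x, ∑ z, (Q a b x z : ℂ) * (Q x z y.1 y.2 : ℂ) = 2 ^ n * (Q a b y.1 y.2 : ℂ) := by
        exact_mod_cast this
      rw [← h8, Fintype.sum_prod_type]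
      simp only [Finset.mul_sum]
      refine Finset.sum_congr rfl fun _ _ => Finset.sum_congr rfl fun _ _ => ?_
      ring
    rw [h1]
    simp
    ring
  have hq : ∑ j, (p j : ℂ) * ((∑ x, v x * ψ j x) * star (∑ x, v x * ψ j x)) = 0 := by
    have : ∑ y, (∑ x, v x * alphaPow 3 n x y) * v y = 0 := by simp [hα]
    rw [← h] at this
    rw [← this]
    simp only [Matrix.sum_apply, Matrix.smul_apply, Matrix.vecMulVec_apply, Finset.mul_sum,
      Finset.sum_mul, star_sum, Pi.star_apply]
    rw [Finset.sum_comm]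
    refine Finset.sum_congr rfl fun y _ => ?_
    rw [Finset.sum_comm]
    refine Finset.sum_congr rfl fun x _ => ?_
    refine Finset.sum_congr rfl fun j _ => ?_
    rw [star_mul', hvs, Complex.real_smul]
    ring
  simp only [normSq_c] at hq
  have hq' : ∑ j, p j * Complex.normSq (∑ x, v x * ψ j x) = 0 := by exact_mod_cast hq
  rw [Finset.sum_eq_zero_iff_of_nonneg
    (fun j _ => mul_nonneg (hp j) (Complex.normSq_nonneg _))] at hq'
  have h0 := hq' i (Finset.mem_univ _)
  rcases mul_eq_zero.1 h0 with h0 | h0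
  · exact absurd h0 hi
  rw [Complex.normSq_eq_zero] at h0
  simp only [hv, sub_mul, Finset.sum_sub_distrib] at h0
  rw [sub_eq_zero, Fintype.sum_prod_type] at h0
  rw [h0]
  simp

/-- the optimal vectors -/
def opt (c : V n) : V n × V n → ℂ := fun x => ((Real.sqrt (2 ^ n))⁻¹ : ℝ) * (M x.1 x.2 c : ℂ)

theorem sqrt_sq_inv (n : ℕ) : (((Real.sqrt (2 ^ n))⁻¹ : ℝ) : ℂ) * (((Real.sqrt (2 ^ n))⁻¹ : ℝ) : ℂ) = ((2:ℂ) ^ n)⁻¹ := by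
  rw [← Complex.ofReal_mul, ← mul_inv, Real.mul_self_sqrt (by positivity)]
  push_cast; rfl

theorem opt_mul (c : V n) (x y : V n × V n) :
    opt c x * star (opt c y) = ((2:ℂ) ^ n)⁻¹ * ((M x.1 x.2 c * M y.1 y.2 c : ℤ) : ℂ) := by
  rw [← sqrt_sq_inv]
  simp only [opt, star_mul', Complex.star_def, Complex.conj_ofReal, Int.cast_mul]
  have : (starRingEnd ℂ) (M y.1 y.2 c : ℂ) = (M y.1 y.2 c : ℂ) := by simp
  rw [this]
  ring

theorem opt_norm (c : V n) : ∑ x, Complex.normSq (opt c x) = 1 := by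
  have : ∑ x, (Complex.normSq (opt c x) : ℂ) = 1 := by
    simp only [← normSq_c, opt_mul]
    rw [← Finset.mul_sum, Fintype.sum_prod_type]
    have h7 : ∑ a, ∑ b, ((M a b c * M a b c : ℤ) : ℂ) = 2 ^ n := by exact_mod_cast M7 c
    rw [h7]
    exact inv_mul_cancel₀ (by positivity)
  exact_mod_cast this

theorem opt_ent (c : V n) : vnEntropy (ptraceSnd (Matrix.vecMulVec (opt c) (star (opt c)))) = n := by
  refine ent_eq (pt_psd _).1 (pt_trace _ (opt_norm c)) n ?_
  have hL : ∀ a a', ptraceSnd (Matrix.vecMulVec (opt c) (star (opt c))) a a' =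
      ((2:ℂ) ^ n)⁻¹ * (L a a' c c : ℂ) := by
    intro a a'
    rw [pt_apply, ← M2]
    simp only [opt_mul]
    rw [← Finset.mul_sum]
    push_cast; rfl
  ext a a''
  simp only [Matrix.mul_apply, Matrix.smul_apply, hL, smul_eq_mul]
  rw [← M6 a a'' c]
  push_cast
  simp only [Finset.mul_sum]
  refine Finset.sum_congr rfl fun _ _ => ?_
  ring

theorem opt_sum : ∑ c : V n, (((3:ℝ) ^ n)⁻¹) • Matrix.vecMulVec (opt c) (star (opt c)) = alphaPow 3 n := by
  ext x y
  rw [alpha_eq, ← M1]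
  simp only [Matrix.sum_apply, Matrix.smul_apply, Matrix.vecMulVec_apply, Pi.star_apply, opt_mul]
  push_cast
  rw [Finset.mul_sum]
  refine Finset.sum_congr rfl fun c _ => ?_
  have : (6:ℂ) ^ n = 3 ^ n * 2 ^ n := by rw [← mul_pow]; norm_num
  rw [this, mul_inv, Complex.real_smul]
  push_cast
  ring

end Yura

/-- For every integer `n ≥ 1`, `E_F(α₃^{⊗n}) = n` (Yura's result). -/
theorem EoF_alphaPow_three (n : ℕ) (hn : 1 ≤ n) :
    EoF (alphaPow 3 n) = (n : ℝ) := by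
  unfold EoF
  refine IsLeast.csInf_eq ⟨?_, ?_⟩
  · let e := (Fintype.equivFin (Yura.V n)).symm
    have hcard : Fintype.card (Yura.V n) = 3 ^ n := by simp
    refine ⟨Fintype.card (Yura.V n), fun _ => ((3:ℝ) ^ n)⁻¹, fun i => Yura.opt (e i), ?_, ?_, ?_, ?_, ?_⟩
    · intro i; positivity
    · simp
    · intro i; exact Yura.opt_norm _
    · rw [← Yura.opt_sum]
      exact Equiv.sum_comp e (fun c => (((3:ℝ) ^ n)⁻¹) • Matrix.vecMulVec (Yura.opt c) (star (Yura.opt c)))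
    · have h1 : ∀ c : Yura.V n, vnEntropy (ptraceSnd (Matrix.vecMulVec (Yura.opt c) (star (Yura.opt c)))) = n := Yura.opt_ent
      simp only [h1]
      simp
  · rintro E ⟨k, p, ψ, hp, hs, hn, hρ, rfl⟩
    calc (n : ℝ) = ∑ i, p i * n := by rw [← Finset.sum_mul, hs, one_mul]
      _ ≤ _ := by
        refine Finset.sum_le_sum fun i _ => ?_
        by_cases hi : p i = 0
        · simp [hi]
        · refine mul_le_mul_of_nonneg_left ?_ (hp i)
          exact Yura.ent_supp (ψ i) (hn i) (fun a b => Yura.supp_of_ensemble p ψ hp hρ i hi a b)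

end
end
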